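/- Let n > 4 and let L = H(n) over ℂ with its ℤ-grading. If f ∈ BDer(L)_0 is a super-biderivation of ℤ-degree 0, then f is inner: there exists λ ∈ ℂ such that f(x,y) = λ[x,y] for all x, y ∈ L. -/

import Mathlib

open scoped BigOperators

noncomputable section

namespace CartanSuper

/-- Coordinates of the exterior algebra `Λ(n)` with respect to the monomial basis
`{x_S : S ⊆ {1,…,n}}`. -/
abbrev Lambda (n : ℕ) := Finset (Fin n) → ℂ

/-- Endomorphism algebra of `Λ(n)`. -/
abbrev E (n : ℕ) := Module.End ℂ (Lambda n)

variable (n : ℕ)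

/-- `(−1)^k`. -/
def msign (k : ℕ) : ℂ := (-1 : ℂ) ^ k

/-- The basis monomial `x_S = x_{i₁}⋯x_{i_k}` (indices in increasing order). -/
def mono (S : Finset (Fin n)) : Lambda n := fun T => if T = S then 1 else 0

/-- Number of inversions between `S` and `T`. -/
def inversions (S T : Finset (Fin n)) : ℕ := ((S ×ˢ T).filter fun p => p.2 < p.1).card

/-- The multiplication of `Λ(n)` in coordinates:
`x_S · x_T = (−1)^{inversions} x_{S ∪ T}` for disjoint `S, T` and `0` otherwise. -/
def lmulFun (f g : Lambda n) : Lambda n :=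
  fun U => ∑ S ∈ U.powerset, msign (inversions n S (U \ S)) * f S * g (U \ S)

/-- Left multiplication by an element of `Λ(n)`, as a linear map `Λ(n) →ₗ End Λ(n)`. -/
def mulOp : Lambda n →ₗ[ℂ] E n where
  toFun f :=
    { toFun := lmulFun n f
      map_add' := by
        intro g h; funext U
        simp [lmulFun, mul_add, Finset.sum_add_distrib]
      map_smul' := by
        intro c g; funext U
        simp only [lmulFun, Pi.smul_apply, smul_eq_mul, RingHom.id_apply, Finset.mul_sum]
        exact Finset.sum_congr rfl (by intros; ring) }
  map_add' := by
    intro f g; apply LinearMap.ext; intro h; funext U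
    show lmulFun n (f + g) h U = lmulFun n f h U + lmulFun n g h U
    simp only [lmulFun]
    rw [← Finset.sum_add_distrib]
    exact Finset.sum_congr rfl (by intros; simp [Pi.add_apply]; ring)
  map_smul' := by
    intro c f; apply LinearMap.ext; intro h; funext U
    show lmulFun n (c • f) h U = (c • lmulFun n f h) U
    simp only [lmulFun, Pi.smul_apply, smul_eq_mul, Finset.mul_sum]
    exact Finset.sum_congr rfl (by intros; ring)

/-- The superderivation `∂_i` of `Λ(n)`, in coordinates. -/
def pd (i : Fin n) : E n where
  toFun f := fun S =>
    if i ∈ S then 0 else msign (S.filter (· < i)).card * f (insert i S)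
  map_add' := by
    intro f g; funext S; by_cases h : i ∈ S <;> simp [h, mul_add]
  map_smul' := by
    intro c f; funext S; by_cases h : i ∈ S <;> simp [h] <;> ring

/-- The parity operator `σ` of `Λ(n)`: `σ(x_S) = (−1)^{|S|} x_S`. -/
def par : E n where
  toFun f := fun S => msign S.card * f S
  map_add' := by intro f g; funext S; simp [mul_add]
  map_smul' := by intro c f; funext S; simp; ring

/-- The super-commutator `[D,F] = D∘F − (−1)^{|D||F|} F∘D`, extended bilinearly to all of
`End Λ(n)` using the parity operator `σ`
(for homogeneous `D`, `σ∘D∘σ = (−1)^{|D|} D`). -/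
def sbFun (D F : E n) : E n :=
  D * F - (2:ℂ)⁻¹ • ((F + par n * F * par n) * D + (F - par n * F * par n) * (par n * D * par n))

/-- The super-commutator as a bilinear map. -/
def sbL : E n →ₗ[ℂ] E n →ₗ[ℂ] E n :=
  LinearMap.mk₂ ℂ (sbFun n)
    (fun D D' F => by
      simp only [sbFun, add_mul, sub_mul, mul_add, mul_sub, smul_mul_assoc, mul_smul_comm,
        smul_add, smul_sub]
      module)
    (fun c D F => by
      simp only [sbFun, add_mul, sub_mul, mul_add, mul_sub, smul_mul_assoc, mul_smul_comm,
        smul_add, smul_sub]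
      module)
    (fun D F F' => by
      simp only [sbFun, add_mul, sub_mul, mul_add, mul_sub, smul_mul_assoc, mul_smul_comm,
        smul_add, smul_sub]
      module)
    (fun c D F => by
      simp only [sbFun, add_mul, sub_mul, mul_add, mul_sub, smul_mul_assoc, mul_smul_comm,
        smul_add, smul_sub]
      module)

/-- Shorthand for the super-commutator. -/
def sb (D F : E n) : E n := sbL n D F

/-- The ℤ₂-homogeneous component of `Λ(n)` of parity `p`. -/
def lpar (p : ZMod 2) : Submodule ℂ (Lambda n) where
  carrier := {f | ∀ S : Finset (Fin n), (S.card : ZMod 2) ≠ p → f S = 0}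
  add_mem' := by intro f g hf hg S hS; simp [Pi.add_apply, hf S hS, hg S hS]
  zero_mem' := by intro S hS; rfl
  smul_mem' := by intro c f hf S hS; simp [Pi.smul_apply, hf S hS]

/-- The ℤ-homogeneous component of `Λ(n)` of degree `m` (zero unless `0 ≤ m ≤ n`). -/
def ldeg (m : ℤ) : Submodule ℂ (Lambda n) where
  carrier := {f | ∀ S : Finset (Fin n), (S.card : ℤ) ≠ m → f S = 0}
  add_mem' := by intro f g hf hg S hS; simp [Pi.add_apply, hf S hS, hg S hS]
  zero_mem' := by intro S hS; rfl
  smul_mem' := by intro c f hf S hS; simp [Pi.smul_apply, hf S hS]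

/-- Endomorphisms of `Λ(n)` that are ℤ₂-homogeneous of parity `p`. -/
def epar (p : ZMod 2) : Submodule ℂ (E n) where
  carrier := {D | ∀ (q : ZMod 2), ∀ f ∈ lpar n q, D f ∈ lpar n (q + p)}
  add_mem' := by
    intro D F hD hF q f hf
    simpa [LinearMap.add_apply] using (lpar n (q + p)).add_mem (hD q f hf) (hF q f hf)
  zero_mem' := by intro q f hf; simpa using (lpar n (q + p)).zero_mem
  smul_mem' := by
    intro c D hD q f hf
    simpa [LinearMap.smul_apply] using (lpar n (q + p)).smul_mem c (hD q f hf)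

/-- Endomorphisms of `Λ(n)` that are ℤ-homogeneous of degree `d`. -/
def edeg (d : ℤ) : Submodule ℂ (E n) where
  carrier := {D | ∀ (m : ℤ), ∀ f ∈ ldeg n m, D f ∈ ldeg n (m + d)}
  add_mem' := by
    intro D F hD hF m f hf
    simpa [LinearMap.add_apply] using (ldeg n (m + d)).add_mem (hD m f hf) (hF m f hf)
  zero_mem' := by intro m f hf; simpa using (ldeg n (m + d)).zero_mem
  smul_mem' := by
    intro c D hD m f hf
    simpa [LinearMap.smul_apply] using (ldeg n (m + d)).smul_mem c (hD m f hf)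

/-- The linear map `(f₁,…,f_n) ↦ ∑ᵢ fᵢ ∂ᵢ`. -/
def Wmap : (Fin n → Lambda n) →ₗ[ℂ] E n where
  toFun F := ∑ i, mulOp n (F i) * pd n i
  map_add' := by
    intro F G
    simp only [Pi.add_apply, map_add, add_mul, Finset.sum_add_distrib]
  map_smul' := by
    intro c F
    simp only [RingHom.id_apply, Pi.smul_apply, map_smul, smul_mul_assoc, Finset.smul_sum]

/-- The divergence `(f₁,…,f_n) ↦ ∑ᵢ ∂ᵢ(fᵢ)`. -/
def divMap : (Fin n → Lambda n) →ₗ[ℂ] Lambda n where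
  toFun F := ∑ i, pd n i (F i)
  map_add' := by
    intro F G
    simp only [Pi.add_apply, map_add, Finset.sum_add_distrib]
  map_smul' := by
    intro c F
    simp only [RingHom.id_apply, Pi.smul_apply, map_smul, Finset.smul_sum]

/-- The Witt type Lie superalgebra `W(n) = {∑ fᵢ∂ᵢ : fᵢ ∈ Λ(n)}`. -/
def Wn : Submodule ℂ (E n) := LinearMap.range (Wmap n)

/-- Divergence-free coefficient tuples. -/
def divFree : Submodule ℂ (Fin n → Lambda n) := LinearMap.ker (divMap n)

/-- The special type Lie superalgebra `S(n) = {∑ fᵢ∂ᵢ : ∑ ∂ᵢ(fᵢ) = 0}`. -/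
def Sn : Submodule ℂ (E n) := (divFree n).map (Wmap n)

/-- The top monomial `ω = x₁x₂⋯x_n`. -/
def omegaTop : Lambda n := mono n Finset.univ

/-- `1 − x₁x₂⋯x_n`. -/
def oneM : Lambda n := mono n ∅ - omegaTop n

/-- Multiplication of every coefficient by `1 − x₁⋯x_n`. -/
def oneMScale : (Fin n → Lambda n) →ₗ[ℂ] (Fin n → Lambda n) :=
  LinearMap.pi fun i => (mulOp n (oneM n)) ∘ₗ LinearMap.proj i

/-- The Lie superalgebra `S̃(n) = {(1−x₁⋯x_n)∑ fᵢ∂ᵢ : ∑ ∂ᵢ(fᵢ) = 0}` (`n` even). -/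
def Stn : Submodule ℂ (E n) := (divFree n).map (Wmap n ∘ₗ oneMScale n)

/-- The conjugate index `i'`. -/
def cidx (i : Fin n) : Fin n :=
  ⟨if i.val < n / 2 then i.val + n / 2 else if i.val < 2 * (n / 2) then i.val - n / 2 else i.val,
   by have := i.isLt; split_ifs <;> omega⟩

/-- The linear map `f ↦ D_H(f) = (−1)^{|f|} ∑ᵢ ∂ᵢ(f)∂_{i'}` (the sign is implemented by the
parity operator `σ`, so that this is a single linear map agreeing with `D_H` on homogeneous
elements). -/
def DHmap : Lambda n →ₗ[ℂ] E n where
  toFun f := ∑ i, mulOp n (pd n i (par n f)) * pd n (cidx n i)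
  map_add' := by
    intro f g
    simp only [map_add, add_mul, Finset.sum_add_distrib]
  map_smul' := by
    intro c f
    simp only [RingHom.id_apply, map_smul, smul_mul_assoc, Finset.smul_sum]

/-- Evaluation of the top coefficient. -/
def evalTop : Lambda n →ₗ[ℂ] ℂ := LinearMap.proj Finset.univ

/-- The Hamiltonian Lie superalgebra `H(n) = {D_H(f) : f ∈ ⊕_{i=0}^{n−1} Λ(n)_i}`. -/
def Hn : Submodule ℂ (E n) := (LinearMap.ker (evalTop n)).map (DHmap n)

/-- `H̃(n) = {D_H(f) : f ∈ Λ(n)}`. -/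
def HtN : Submodule ℂ (E n) := LinearMap.range (DHmap n)

/-- The degree derivation `𝒞 = ∑ᵢ xᵢ∂ᵢ`. -/
def CC : E n := ∑ i, mulOp n (mono n {i}) * pd n i

/-- The span of the diagonal elements `xᵢ∂ᵢ`. -/
def diagSpan : Submodule ℂ (E n) :=
  Submodule.span ℂ (Set.range fun i : Fin n => mulOp n (mono n {i}) * pd n i)

/-- The four families of Cartan type Lie superalgebras. -/
inductive CT | W | S | St | H
deriving DecidableEq

/-- Validity of the parameter `n` for each family. -/
def CT.valid : CT → ℕ → Prop
  | .W, n => 4 ≤ n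
  | .S, n => 4 ≤ n
  | .St, n => 4 ≤ n ∧ Even n
  | .H, n => 4 < n

/-- The Cartan type Lie superalgebra `L` itself. -/
def CT.algebra : CT → (n : ℕ) → Submodule ℂ (E n)
  | .W, n => Wn n
  | .S, n => Sn n
  | .St, n => Stn n
  | .H, n => Hn n

/-- The extended algebra `L'`: `L' = L` for `W(n)` and `S̃(n)`, `L' = S(n) ⊕ ℂ𝒞` for `S(n)`,
and `L' = H̃(n) ⊕ ℂ𝒞` for `H(n)`. -/
def CT.prime : CT → (n : ℕ) → Submodule ℂ (E n)
  | .W, n => Wn n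
  | .S, n => Sn n ⊔ Submodule.span ℂ {CC n}
  | .St, n => Stn n
  | .H, n => HtN n ⊔ Submodule.span ℂ {CC n}

/-- The top degree `ξ_L` of the ℤ-grading. -/
def CT.xi : CT → (n : ℕ) → ℤ
  | .W, n => (n : ℤ) - 1
  | .S, n => (n : ℤ) - 2
  | .St, n => (n : ℤ) - 2
  | .H, n => (n : ℤ) - 3

/-- The ℤ-grading component `L_j = L ∩ W(n)_j`; for `S̃(n)` the component of degree `−1`
is `span{(1−x₁⋯x_n)∂ᵢ}` instead. -/
def CT.grade (t : CT) (n : ℕ) (j : ℤ) : Submodule ℂ (E n) :=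
  match t with
  | .St =>
      if j = -1 then
        Submodule.span ℂ (Set.range fun i : Fin n => mulOp n (oneM n) * pd n i)
      else Stn n ⊓ edeg n j
  | t => t.algebra n ⊓ edeg n j

/-- The ℤ-grading component `L'_j` of the extended algebra `L'`. -/
def CT.grade' (t : CT) (n : ℕ) (j : ℤ) : Submodule ℂ (E n) :=
  match t with
  | .St => CT.grade .St n j
  | t => t.prime n ⊓ edeg n j

/-- The standard Cartan subalgebra `H_L` of `L`: the part of the diagonal
`span{xᵢ∂ᵢ}` lying in `L`. -/
def CT.cartan (t : CT) (n : ℕ) : Submodule ℂ (E n) := t.algebra n ⊓ diagSpan n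

/-- The weight space of `M ⊆ End Λ(n)` of weight `μ ∈ H_L^*` under the adjoint action
of the standard Cartan subalgebra of `L`. -/
def wtsp (t : CT) (n : ℕ) (M : Submodule ℂ (E n)) (μ : Module.Dual ℂ (t.cartan n)) :
    Submodule ℂ (E n) where
  carrier := {x | x ∈ M ∧ ∀ h : t.cartan n, sbL n h x = μ h • x}
  add_mem' := by
    rintro x y ⟨hx, hx'⟩ ⟨hy, hy'⟩
    exact ⟨M.add_mem hx hy, fun h => by simp [map_add, hx' h, hy' h, smul_add]⟩
  zero_mem' := ⟨M.zero_mem, fun h => by simp⟩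
  smul_mem' := by
    rintro c x ⟨hx, hx'⟩
    exact ⟨M.smul_mem c hx, fun h => by simp [map_smul, hx' h, smul_comm c]⟩

/-- The set of roots of `M` with respect to the standard Cartan subalgebra of `L`:
the nonzero weights with nonzero weight space. -/
def CT.roots (t : CT) (n : ℕ) (M : Submodule ℂ (E n)) : Set (Module.Dual ℂ (t.cartan n)) :=
  {ε | ε ≠ 0 ∧ wtsp t n M ε ≠ ⊥}

/-- The sign `(−1)^p` for `p ∈ ℤ₂`. -/
def sgn (p : ZMod 2) : ℂ := (-1 : ℂ) ^ p.val

/-- `f` is a super-biderivation of `L` of ℤ₂-degree `pf`: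
a bilinear map with `f(L_α, L_β) ⊆ L_{α+β+pf}` satisfying
`f([x,y],z) = (−1)^{|x||f|}[x,f(y,z)] + (−1)^{|y||z|}[f(x,z),y]` and
`f(x,[y,z]) = [f(x,y),z] + (−1)^{(|f|+|x|)|y|}[y,f(x,z)]` for homogeneous `x,y,z ∈ L`.
(The bilinear map is given as a bilinear map on the ambient space `End Λ(n)`;
only its restriction to `L` is relevant.) -/
structure IsSuperBider (L : Submodule ℂ (E n)) (pf : ZMod 2)
    (f : E n →ₗ[ℂ] E n →ₗ[ℂ] E n) : Prop where
  maps : ∀ (α β : ZMod 2), ∀ x ∈ L ⊓ epar n α, ∀ y ∈ L ⊓ epar n β,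
    f x y ∈ L ⊓ epar n (α + β + pf)
  eq1 : ∀ (α β γ : ZMod 2), ∀ x ∈ L ⊓ epar n α, ∀ y ∈ L ⊓ epar n β, ∀ z ∈ L ⊓ epar n γ,
    f (sbL n x y) z = sgn (α * pf) • sbL n x (f y z) + sgn (β * γ) • sbL n (f x z) y
  eq2 : ∀ (α β γ : ZMod 2), ∀ x ∈ L ⊓ epar n α, ∀ y ∈ L ⊓ epar n β, ∀ z ∈ L ⊓ epar n γ,
    f x (sbL n y z) = sbL n (f x y) z + sgn ((pf + α) * β) • sbL n y (f x z)

/-- `D` is a superderivation of `L` of ℤ₂-degree `p`: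
`D(L_α) ⊆ L_{α+p}` and `D([x,y]) = [D(x),y] + (−1)^{|D||x|}[x,D(y)]` for homogeneous
`x, y ∈ L`. (Given as a linear map on the ambient space `End Λ(n)`.) -/
structure IsSuperDer (L : Submodule ℂ (E n)) (p : ZMod 2)
    (D : E n →ₗ[ℂ] E n) : Prop where
  maps : ∀ (α : ZMod 2), ∀ x ∈ L ⊓ epar n α, D x ∈ L ⊓ epar n (α + p)
  leib : ∀ (α β : ZMod 2), ∀ x ∈ L ⊓ epar n α, ∀ y ∈ L ⊓ epar n β,
    D (sbL n x y) = sbL n (D x) y + sgn (p * α) • sbL n x (D y)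

/-- `f ∈ BDer(L)_ε`: the super-biderivation `f` has weight `ε ∈ H_L^*`, i.e.
`f(L_η, L_ζ) ⊆ L_{ε+η+ζ}` for all weights `η, ζ`. -/
def CT.HasWeight (t : CT) (n : ℕ) (f : E n →ₗ[ℂ] E n →ₗ[ℂ] E n)
    (ε : Module.Dual ℂ (t.cartan n)) : Prop :=
  ∀ (η ζ : Module.Dual ℂ (t.cartan n)),
    ∀ x ∈ wtsp t n (t.algebra n) η, ∀ y ∈ wtsp t n (t.algebra n) ζ,
      f x y ∈ wtsp t n (t.algebra n) (ε + η + ζ)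

/-- `f ∈ BDer(L)_i`: the super-biderivation `f` has ℤ-degree `i`, i.e.
`f(L_j, L_k) ⊆ L_{i+j+k}` for all `j, k ∈ ℤ`. -/
def CT.HasDeg (t : CT) (n : ℕ) (f : E n →ₗ[ℂ] E n →ₗ[ℂ] E n) (i : ℤ) : Prop :=
  ∀ (j k : ℤ), ∀ x ∈ t.grade n j, ∀ y ∈ t.grade n k, f x y ∈ t.grade n (i + j + k)

theorem core_coeff (n : ℕ) (hn : 4 < n) (a b : Fin n → Fin n → Fin n → Fin n → ℂ)
    (h0 : ∀ i j m l, a i j m l = - a j i m l)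
    (h0' : ∀ i j m l, b i j m l = - b j i m l)
    (h1 : ∀ i j k, i ≠ j → i ≠ k → j ≠ k → ∀ m l, a i j m l =
      ((if l = i then a k j m k else 0) - (if l = k then a k j m i else 0)) -
      ((if l = k then a i k m j else 0) - (if l = j then a i k m k else 0)))
    (h1' : ∀ i j k, i ≠ j → i ≠ k → j ≠ k → ∀ m l, b i j m l =
      ((if l = i then b k j m k else 0) - (if l = k then b k j m i else 0)) -
      ((if l = k then b i k m j else 0) - (if l = j then b i k m k else 0)))
    (h2 : ∀ i j k l m s, 
      ((if m = l then a i j k s else 0) - (if m = k then a i j l s else 0)) -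
      ((if s = k then a i j m l else 0) - (if s = l then a i j m k else 0)) =
      ((if m = j then b k l i s else 0) - (if m = i then b k l j s else 0)) -
      ((if s = i then b k l m j else 0) - (if s = j then b k l m i else 0))) :
    ∃ lam : ℂ, ∀ i j, i ≠ j → ∀ m l,
      a i j m l = lam * ((if m = j ∧ l = i then 1 else 0) - (if m = i ∧ l = j then 1 else 0)) ∧
      b i j m l = -lam * ((if m = j ∧ l = i then 1 else 0) - (if m = i ∧ l = j then 1 else 0)) := by
  have ex : ∀ i j k : Fin n, ∃ l, l ≠ i ∧ l ≠ j ∧ l ≠ k := by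
    intro i j k
    by_contra hc
    push Not at hc
    have : (Finset.univ : Finset (Fin n)) ⊆ {i, j, k} := by
      intro l _
      have := hc l
      simp only [Finset.mem_insert, Finset.mem_singleton]
      tauto
    have h3 := Finset.card_le_card this
    have h4 : ({i, j, k} : Finset (Fin n)).card ≤ 3 := Finset.card_le_three
    simp at h3
    omega
  have s1 : ∀ i j m l, i ≠ j → l ≠ i → l ≠ j → a i j m l = 0 := by
    intro i j m l hij hli hlj
    obtain ⟨k, k1, k2, k3⟩ := ex i j l
    rw [h1 i j k hij k1.symm k2.symm]
    simp [hli, hlj, k3.symm]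
  have s1' : ∀ i j m l, i ≠ j → l ≠ i → l ≠ j → b i j m l = 0 := by
    intro i j m l hij hli hlj
    obtain ⟨k, k1, k2, k3⟩ := ex i j l
    rw [h1' i j k hij k1.symm k2.symm]
    simp [hli, hlj, k3.symm]
  have s2 : ∀ i j m s, i ≠ j → m ≠ i → m ≠ j → a i j m s = 0 := by
    intro i j m s hij hmi hmj
    obtain ⟨l, l1, l2, l3⟩ := ex i j m
    have := h2 i j m l l s
    grind
  have s2' : ∀ i j m s, i ≠ j → m ≠ i → m ≠ j → b i j m s = 0 := by
    intro i j m s hij hmi hmj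
    obtain ⟨l, l1, l2, l3⟩ := ex i j m
    have := h2 m l i j l s
    grind
  have s3 : ∀ i j, i ≠ j → a i j j j = 0 := by
    intro i j hij
    obtain ⟨k, k1, k2, -⟩ := ex i j j
    have := h2 i j j k k j
    grind
  have s3' : ∀ i j, i ≠ j → b i j j j = 0 := by
    intro i j hij
    obtain ⟨k, k1, k2, -⟩ := ex i j j
    have := h2 j k i j k j
    grind
  have pq : ∀ i j k, i ≠ j → i ≠ k → j ≠ k → a i j j i = - b j k k j := by
    intro i j k hij hik hjk
    have := h2 i j j k k i
    grind
  have qp : ∀ i j k, i ≠ j → i ≠ k → j ≠ k → b i j j i = - a j k k j := by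
    intro i j k hij hik hjk
    have := h2 j k i j k i
    grind
  have pp : ∀ i j k l, i ≠ j → i ≠ k → j ≠ k → l ≠ k → l ≠ j → a i j j i = a k l l k := by
    intro i j k l h1 h2 h3 h4 h5
    rw [pq i j k h1 h2 h3, qp j k l h3 h5.symm h4.symm, neg_neg]
  have psym : ∀ i j, i ≠ j → a i j j i = a j i i j := by
    intro i j hij
    obtain ⟨k, k1, k2, -⟩ := ex i j j
    obtain ⟨l, l1, l2, l3⟩ := ex i j k
    rw [pp i j k l hij k1.symm k2.symm l3 l2, pp k l j i l3.symm k2 l2 hij l1.symm]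
  have prot : ∀ i j k, i ≠ j → i ≠ k → j ≠ k → a i j j i = a i k k i := by
    intro i j k h1 h2 h3
    rw [pp i j k i h1 h2 h3 h2 h1, psym k i h2.symm]
  have pall : ∀ i j k l, i ≠ j → k ≠ l → a i j j i = a k l l k := by
    intro i j k l h1 h2
    by_cases hik : i = k
    · subst hik
      by_cases hjl : j = l
      · rw [hjl]
      · exact prot i j l h1 h2 hjl
    · by_cases hjk : j = k
      · subst hjk
        rw [psym i j h1]
        by_cases hil : i = l
        · rw [hil]
        · exact prot j i l h1.symm h2 hil
      · rw [prot i j k h1 hik hjk, psym i k hik]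
        by_cases hil : i = l
        · rw [hil]
        · exact prot k i l (Ne.symm hik) h2 hil
  have e01 : (⟨0, by omega⟩ : Fin n) ≠ ⟨1, by omega⟩ := by simp
  refine ⟨a ⟨0, by omega⟩ ⟨1, by omega⟩ ⟨1, by omega⟩ ⟨0, by omega⟩, ?_⟩
  generalize (⟨0, by omega⟩ : Fin n) = z at *
  generalize (⟨1, by omega⟩ : Fin n) = o at *
  intro i j hij m l
  obtain ⟨k, k1, k2, -⟩ := ex i j j
  have A1 : a i j j i = a z o o z := pall _ _ _ _ hij e01
  have A2 : a j i i j = a z o o z := pall _ _ _ _ hij.symm e01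
  have B1 : b i j j i = - a z o o z := by
    rw [qp i j k hij k1.symm k2.symm, pall _ _ _ _ k2.symm e01]
  have B2 : b j i i j = - a z o o z := by
    rw [qp j i k hij.symm k2.symm k1.symm, pall _ _ _ _ k1.symm e01]
  generalize a z o o z = t at *
  have A3 := h0 i j i j
  have B3 := h0' i j i j
  have A4 := h0 i j i i
  have B4 := h0' i j i i
  have A5 := s3 j i hij.symm
  have B5 := s3' j i hij.symm
  have A6 := s3 i j hij
  have B6 := s3' i j hij
  have C1 := s1 i j m l hij
  have C1' := s1' i j m l hij
  have C2 := s2 i j m l hij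
  have C2' := s2' i j m l hij
  clear h0 h0' h1 h1' h2 s1 s1' s2 s2' s3 s3' pq qp pp psym prot pall ex
  by_cases hm1 : m = i
  · subst hm1
    by_cases hl1 : l = m
    · subst hl1; simp [hij]; constructor <;> simp_all
    · by_cases hl2 : l = j
      · subst hl2; simp [hij, hl1]; constructor <;> simp_all
      · simp [hij, hl1, hl2]; constructor <;> simp_all
  · by_cases hm2 : m = j
    · subst hm2
      by_cases hl1 : l = i
      · subst hl1; simp [hij, hm1]; constructor <;> simp_all
      · by_cases hl2 : l = m
        · subst hl2; simp [hm1]; constructor <;> simp_all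
        · simp [hl1, hm1]; constructor <;> simp_all
    · simp [hm1, hm2]; constructor <;> simp_all

section Aux

variable {n}

theorem msign_add (a b : ℕ) : msign (a + b) = msign a * msign b := pow_add _ _ _

theorem msign_mul_self (a : ℕ) : msign a * msign a = 1 := by
  rw [← msign_add, msign, ← two_mul, pow_mul]; simp

theorem mulOp_apply (f g : Lambda n) (U : Finset (Fin n)) :
    mulOp n f g U = ∑ S ∈ U.powerset, msign (inversions n S (U \ S)) * f S * g (U \ S) := rfl

theorem pd_apply (i : Fin n) (f : Lambda n) (S : Finset (Fin n)) :
    pd n i f S = if i ∈ S then 0 else msign (S.filter (· < i)).card * f (insert i S) := rfl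

theorem par_apply (f : Lambda n) (S : Finset (Fin n)) :
    par n f S = msign S.card * f S := rfl

theorem inv_insert_left (S T : Finset (Fin n)) (i : Fin n) (hi : i ∉ S) :
    inversions n (insert i S) T = inversions n S T + (T.filter (· < i)).card := by
  unfold inversions
  have : ((insert i S) ×ˢ T).filter (fun p => p.2 < p.1) =
      ((S ×ˢ T).filter fun p => p.2 < p.1) ∪ (T.filter (· < i)).image (fun t => (i, t)) := by
    ext ⟨x, y⟩
    simp only [Finset.mem_filter, Finset.mem_product, Finset.mem_insert, Finset.mem_union,
      Finset.mem_image, Prod.mk.injEq]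
    constructor
    · rintro ⟨⟨rfl | h, hy⟩, hlt⟩
      · exact Or.inr ⟨y, ⟨hy, hlt⟩, rfl, rfl⟩
      · exact Or.inl ⟨⟨h, hy⟩, hlt⟩
    · rintro (⟨⟨h, hy⟩, hlt⟩ | ⟨t, ⟨ht, hlt⟩, rfl, rfl⟩)
      · exact ⟨⟨Or.inr h, hy⟩, hlt⟩
      · exact ⟨⟨Or.inl rfl, ht⟩, hlt⟩
  rw [this, Finset.card_union_of_disjoint, Finset.card_image_of_injective]
  · intro a b h; simpa using h
  · rw [Finset.disjoint_left]
    rintro ⟨x, y⟩ h1 h2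
    simp only [Finset.mem_filter, Finset.mem_product, Finset.mem_image, Prod.mk.injEq] at h1 h2
    obtain ⟨t, _, rfl, _⟩ := h2
    exact hi h1.1.1

theorem inv_insert_right (S T : Finset (Fin n)) (i : Fin n) (hi : i ∉ T) :
    inversions n S (insert i T) = inversions n S T + (S.filter (i < ·)).card := by
  unfold inversions
  have : (S ×ˢ (insert i T)).filter (fun p => p.2 < p.1) =
      ((S ×ˢ T).filter fun p => p.2 < p.1) ∪ (S.filter (i < ·)).image (fun t => (t, i)) := by
    ext ⟨x, y⟩
    simp only [Finset.mem_filter, Finset.mem_product, Finset.mem_insert, Finset.mem_union,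
      Finset.mem_image, Prod.mk.injEq]
    constructor
    · rintro ⟨⟨hx, rfl | h⟩, hlt⟩
      · exact Or.inr ⟨x, ⟨hx, hlt⟩, rfl, rfl⟩
      · exact Or.inl ⟨⟨hx, h⟩, hlt⟩
    · rintro (⟨⟨h, hy⟩, hlt⟩ | ⟨t, ⟨ht, hlt⟩, rfl, rfl⟩)
      · exact ⟨⟨h, Or.inr hy⟩, hlt⟩
      · exact ⟨⟨ht, Or.inl rfl⟩, hlt⟩
  rw [this, Finset.card_union_of_disjoint, Finset.card_image_of_injective]
  · intro a b h; simpa using h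
  · rw [Finset.disjoint_left]
    rintro ⟨x, y⟩ h1 h2
    simp only [Finset.mem_filter, Finset.mem_product, Finset.mem_image, Prod.mk.injEq] at h1 h2
    obtain ⟨t, _, _, rfl⟩ := h2
    exact hi h1.1.2

theorem card_lt_gt (S : Finset (Fin n)) (i : Fin n) (hi : i ∉ S) :
    S.card = (S.filter (· < i)).card + (S.filter (i < ·)).card := by
  rw [← Finset.card_filter_add_card_filter_not (s := S) (· < i)]
  congr 2
  apply Finset.filter_congr
  intro x hx
  have : x ≠ i := fun h => hi (h ▸ hx)
  constructor
  · intro h; exact lt_of_le_of_ne (not_lt.mp h) this.symm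
  · intro h; exact not_lt.mpr h.le

theorem card_lt_split (S U : Finset (Fin n)) (i : Fin n) (h : S ⊆ U) :
    (U.filter (· < i)).card = (S.filter (· < i)).card + ((U \ S).filter (· < i)).card := by
  rw [← Finset.card_union_of_disjoint, ← Finset.filter_union, Finset.union_sdiff_of_subset h]
  exact Finset.disjoint_filter_filter Finset.disjoint_sdiff

/-- Sign of the term where `i` is removed from the left factor. -/
theorem sign_left (S U : Finset (Fin n)) (i : Fin n) (hS : i ∉ S) (h : S ⊆ U) :
    msign (U.filter (· < i)).card * msign (inversions n (insert i S) (U \ S)) =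
      msign (inversions n S (U \ S)) * msign (S.filter (· < i)).card := by
  rw [inv_insert_left _ _ _ hS, card_lt_split S U i h, msign_add, msign_add]
  linear_combination (msign (S.filter (· < i)).card * msign (inversions n S (U \ S))) *
    msign_mul_self ((U \ S).filter (· < i)).card

theorem sign_right (S U : Finset (Fin n)) (i : Fin n) (hS : i ∉ S) (hU : i ∉ U \ S) (h : S ⊆ U) :
    msign (U.filter (· < i)).card * msign (inversions n S (insert i (U \ S))) =
      msign (inversions n S (U \ S)) * msign S.card * msign ((U \ S).filter (· < i)).card := by
  rw [inv_insert_right _ _ _ hU, card_lt_split S U i h, card_lt_gt S i hS]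
  simp only [msign_add]
  ring

theorem leib (i : Fin n) (h : Lambda n) :
    pd n i * mulOp n h = mulOp n (pd n i h) + mulOp n (par n h) * pd n i := by
  apply LinearMap.ext; intro g; funext U
  simp only [Module.End.mul_apply, LinearMap.add_apply, Pi.add_apply]
  rw [pd_apply, mulOp_apply, mulOp_apply, mulOp_apply]
  by_cases hi : i ∈ U
  · rw [if_pos hi]
    obtain ⟨V, hV, rfl⟩ : ∃ V, i ∉ V ∧ insert i V = U :=
      ⟨U.erase i, Finset.notMem_erase _ _, Finset.insert_erase hi⟩
    rw [Finset.sum_powerset_insert hV, Finset.sum_powerset_insert hV]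
    have e1 : ∀ S ∈ V.powerset, msign (inversions n (insert i S) (insert i V \ insert i S)) *
        pd n i h (insert i S) * g (insert i V \ insert i S) = 0 := by
      intro S _; simp [pd_apply]
    have e2 : ∀ S ∈ V.powerset, msign (inversions n S (insert i V \ S)) *
        par n h S * pd n i g (insert i V \ S) = 0 := by
      intro S hS
      have : i ∉ S := fun hh => hV (Finset.mem_powerset.mp hS hh)
      simp [pd_apply, this]
    rw [Finset.sum_eq_zero e1, Finset.sum_eq_zero e2, add_zero, zero_add,
      ← Finset.sum_add_distrib]
    symm
    apply Finset.sum_eq_zero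
    intro S hS
    have hS' := Finset.mem_powerset.mp hS
    have hiS : i ∉ S := fun hh => hV (hS' hh)
    have e3 : insert i V \ insert i S = V \ S := by
      ext x; simp only [Finset.mem_sdiff, Finset.mem_insert]
      constructor
      · rintro ⟨rfl | h1, h2⟩
        · exact absurd (Or.inl rfl) h2
        · exact ⟨h1, fun h => h2 (Or.inr h)⟩
      · rintro ⟨h1, h2⟩
        refine ⟨Or.inr h1, ?_⟩
        rintro (rfl | h3)
        · exact hV h1
        · exact h2 h3
    have e4 : insert i V \ S = insert i (V \ S) := Finset.insert_sdiff_of_notMem _ hiS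
    have hVS : i ∉ V \ S := fun hh => hV (Finset.mem_sdiff.mp hh).1
    rw [e3, e4, pd_apply, if_neg hiS, pd_apply, if_neg hVS, par_apply,
      Finset.card_insert_of_notMem hiS, inv_insert_left _ _ _ hiS, inv_insert_right _ _ _ hVS,
      card_lt_gt S i hiS]
    simp only [msign_add]
    have m1 : msign 1 = -1 := by simp [msign]
    rw [m1]
    linear_combination (-msign (inversions n S (V \ S)) * msign (S.filter (· < i)).card *
      msign (S.filter (i < ·)).card * h (insert i S) * g (insert i (V \ S))) *
        msign_mul_self ((V \ S).filter (· < i)).card 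
  · rw [if_neg hi, Finset.sum_powerset_insert hi, ← Finset.sum_add_distrib,
      ← Finset.sum_add_distrib, Finset.mul_sum]
    apply Finset.sum_congr rfl
    intro S hS
    have hS' := Finset.mem_powerset.mp hS
    have hiS : i ∉ S := fun hh => hi (hS' hh)
    have hUS : i ∉ U \ S := fun hh => hi (Finset.mem_sdiff.mp hh).1
    have e3 : insert i U \ insert i S = U \ S := by
      ext x; simp only [Finset.mem_sdiff, Finset.mem_insert]
      constructor
      · rintro ⟨rfl | h1, h2⟩
        · exact absurd (Or.inl rfl) h2
        · exact ⟨h1, fun h => h2 (Or.inr h)⟩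
      · rintro ⟨h1, h2⟩
        refine ⟨Or.inr h1, ?_⟩
        rintro (rfl | h3)
        · exact hi h1
        · exact h2 h3
    have e4 : insert i U \ S = insert i (U \ S) := Finset.insert_sdiff_of_notMem _ hiS
    rw [e3, e4, pd_apply, if_neg hiS, pd_apply, if_neg hUS, par_apply]
    linear_combination (h (insert i S) * g (U \ S)) * sign_left S U i hiS hS' +
      h S * g (insert i (U \ S)) * sign_right S U i hiS hUS hS'

theorem pd_anti (i j : Fin n) : pd n i * pd n j = - (pd n j * pd n i) := by
  apply LinearMap.ext; intro g; funext U
  simp only [Module.End.mul_apply, LinearMap.neg_apply, Pi.neg_apply, pd_apply, Finset.mem_insert]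
  by_cases hij : i = j
  · subst hij; simp
  by_cases hi : i ∈ U
  · simp [hi]
  by_cases hj : j ∈ U
  · simp [hj]
  simp only [hi, hj, hij, Ne.symm hij, or_self, if_false]
  rw [Finset.filter_insert, Finset.filter_insert, Finset.insert_comm]
  have hi' : i ∉ U.filter (· < j) := fun h => hi (Finset.mem_filter.mp h).1
  have hj' : j ∉ U.filter (· < i) := fun h => hj (Finset.mem_filter.mp h).1
  have m1 : msign 1 = -1 := by simp [msign]
  rcases lt_or_gt_of_ne hij with h | h
  · simp only [h, not_lt.mpr h.le, if_true, if_false]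
    rw [Finset.card_insert_of_notMem hi', msign_add, m1]; ring
  · simp only [h, not_lt.mpr h.le, if_true, if_false]
    rw [Finset.card_insert_of_notMem hj', msign_add, m1]; ring

theorem mulOp_one : mulOp n (mono n ∅) = 1 := by
  apply LinearMap.ext; intro g; funext U
  rw [mulOp_apply, Finset.sum_eq_single ∅]
  · simp [mono, inversions, msign]
  · intro S _ h; simp [mono, h]
  · simp

theorem mulOp_apply_one (h : Lambda n) : mulOp n h (mono n ∅) = h := by
  funext U
  rw [mulOp_apply, Finset.sum_eq_single U]
  · simp [mono, inversions, msign]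
  · intro S hS h
    have : U \ S ≠ ∅ := by
      intro h'
      exact h (Finset.Subset.antisymm (Finset.mem_powerset.mp hS) (Finset.sdiff_eq_empty_iff_subset.mp h'))
    simp [mono, this]
  · simp

theorem pd_mono_empty (i : Fin n) : pd n i (mono n ∅) = 0 := by
  funext U; simp [pd_apply, mono]

theorem pd_mono_single (i j : Fin n) : pd n i (mono n {j}) = if i = j then mono n ∅ else 0 := by
  funext U
  rw [pd_apply]
  by_cases hi : i ∈ U
  · have : U ≠ ∅ := Finset.ne_empty_of_mem hi
    split_ifs <;> simp [mono, this]
  · by_cases hU : U = ∅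
    · subst hU
      by_cases hij : i = j <;> simp [mono, msign, hij]
    · have : insert i U ≠ {j} := by
        intro h
        obtain ⟨u, hu⟩ := Finset.nonempty_iff_ne_empty.mpr hU
        have h1 : u ∈ ({j} : Finset (Fin n)) := h ▸ Finset.mem_insert_of_mem hu
        have h2 : i ∈ ({j} : Finset (Fin n)) := h ▸ Finset.mem_insert_self _ _
        rw [Finset.mem_singleton] at h1 h2
        exact hi (h2.trans h1.symm ▸ hu)
      split_ifs <;> simp [mono, this, hU]

theorem par_par : par n * par n = 1 := by
  apply LinearMap.ext; intro g; funext U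
  simp only [Module.End.mul_apply, par_apply, ← mul_assoc, msign_mul_self]; simp

theorem par_pd (i : Fin n) : par n * pd n i = - (pd n i * par n) := by
  apply LinearMap.ext; intro g; funext U
  simp only [Module.End.mul_apply, par_apply, pd_apply, LinearMap.neg_apply, Pi.neg_apply]
  by_cases hi : i ∈ U
  · simp [hi]
  · simp only [hi, if_false, Finset.card_insert_of_notMem hi, msign_add]
    simp [msign]; ring

theorem par_mulOp (h : Lambda n) : par n * mulOp n h = mulOp n (par n h) * par n := by
  apply LinearMap.ext; intro g; funext U
  simp only [Module.End.mul_apply, par_apply, mulOp_apply, Finset.mul_sum]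
  apply Finset.sum_congr rfl
  intro S hS
  have : U.card = S.card + (U \ S).card := by
    rw [add_comm, Finset.card_sdiff_add_card_eq_card (Finset.mem_powerset.mp hS)]
  rw [this, msign_add]; ring

theorem sbL_def (D F : E n) : sbL n D F =
  D * F - (2:ℂ)⁻¹ • ((F + par n * F * par n) * D + (F - par n * F * par n) * (par n * D * par n)) :=
  rfl

theorem e_neg_mul (A B : E n) : -A * B = -(A * B) := by
  apply LinearMap.ext; intro g; simp [Module.End.mul_apply]

theorem e_mul_neg (A B : E n) : A * -B = -(A * B) := by
  apply LinearMap.ext; intro g; simp [Module.End.mul_apply]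

theorem sb_pd (i : Fin n) (F : E n) :
    sbL n (pd n i) F = pd n i * F - par n * F * par n * pd n i := by
  have : par n * pd n i * par n = - pd n i := by
    rw [par_pd, e_neg_mul, mul_assoc, par_par, mul_one]
  rw [sbL_def, this]
  simp only [add_mul, sub_mul, e_mul_neg]
  module

theorem DH_def (g : Lambda n) :
    DHmap n g = ∑ k, mulOp n (pd n k (par n g)) * pd n (cidx n k) := rfl

theorem sb_pd_DH (i : Fin n) (g : Lambda n) :
    sbL n (pd n i) (DHmap n g) = DHmap n (pd n i g) := by
  rw [sb_pd, DH_def, DH_def, Finset.mul_sum, Finset.mul_sum, Finset.sum_mul, Finset.sum_mul,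
    ← Finset.sum_sub_distrib]
  apply Finset.sum_congr rfl
  intro k _
  have e1 : pd n k (par n (pd n i g)) = pd n i (pd n k (par n g)) := by
    have h1 := congrArg (fun D : E n => D g) (par_pd i)
    have h2 := congrArg (fun D : E n => D (par n g)) (pd_anti i k)
    simp only [Module.End.mul_apply, LinearMap.neg_apply] at h1 h2
    rw [h1, h2, map_neg]
  rw [e1, ← mul_assoc, leib]
  set h := pd n k (par n g)
  have e2 : par n * (mulOp n h * pd n (cidx n k)) * par n * pd n i =
      mulOp n (par n h) * pd n i * pd n (cidx n k) := by
    rw [← mul_assoc (par n), par_mulOp, mul_assoc _ (par n), par_pd]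
    simp only [e_mul_neg, e_neg_mul, mul_assoc]
    have e3 : par n * (pd n (cidx n k) * (pd n i * par n)) = pd n (cidx n k) * pd n i := by
      rw [← mul_assoc (par n), par_pd, e_neg_mul, mul_assoc, ← mul_assoc (par n), par_pd,
        e_neg_mul, mul_assoc, par_par, mul_one, e_mul_neg, neg_neg]
    rw [e3, pd_anti i, e_mul_neg]
  rw [e2, add_mul]; abel

theorem DH_one (g : Lambda n) : DHmap n g (mono n ∅) = 0 := by
  rw [DH_def]; simp [LinearMap.sum_apply, Module.End.mul_apply, pd_mono_empty]

end Aux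

section Aux2

variable {n}

theorem single_mem_ldeg (S : Finset (Fin n)) (x : ℂ) :
    (Pi.single S x : Lambda n) ∈ ldeg n (S.card : ℤ) := by
  intro T hT
  rw [Pi.single_apply, if_neg]
  rintro rfl; exact hT rfl

theorem single_mem_lpar (S : Finset (Fin n)) (x : ℂ) :
    (Pi.single S x : Lambda n) ∈ lpar n (S.card : ZMod 2) := by
  intro T hT
  rw [Pi.single_apply, if_neg]
  rintro rfl; exact hT rfl

theorem mono_eq_single (S : Finset (Fin n)) : mono n S = Pi.single S 1 := by
  funext T; simp [mono, Pi.single_apply]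

theorem lambda_sum (h : Lambda n) : h = ∑ S, h S • mono n S := by
  funext T
  simp [Finset.sum_apply, mono]

theorem mono_mem_ldeg (S : Finset (Fin n)) : mono n S ∈ ldeg n (S.card : ℤ) := by
  rw [mono_eq_single]; exact single_mem_ldeg S 1

theorem edeg_le_epar {d : ℤ} {D : E n} (hD : D ∈ edeg n d) : D ∈ epar n (d : ZMod 2) := by
  intro q h hh U hU
  rw [lambda_sum h, map_sum, Finset.sum_apply]
  apply Finset.sum_eq_zero
  intro S _
  rw [map_smul, Pi.smul_apply, smul_eq_mul]
  by_cases hS : (S.card : ZMod 2) = q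
  · rw [hD _ _ (mono_mem_ldeg S) U, mul_zero]
    intro h1
    apply hU
    have := congrArg (fun z : ℤ => (z : ZMod 2)) h1
    push_cast at this
    rw [this, hS]
  · rw [hh S hS, zero_mul]

theorem edeg_epar_zero {d : ℤ} {p : ZMod 2} {D : E n} (hD : D ∈ edeg n d) (hp : D ∈ epar n p)
    (hne : p ≠ (d : ZMod 2)) : D = 0 := by
  apply LinearMap.pi_ext
  intro S x
  funext U
  rw [LinearMap.zero_apply, Pi.zero_apply]
  by_cases h1 : (U.card : ℤ) = S.card + d
  · apply hp _ _ (single_mem_lpar S x) U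
    intro h2
    have := congrArg (fun z : ℤ => (z : ZMod 2)) h1
    push_cast at this
    rw [this] at h2
    exact hne (add_left_cancel h2).symm
  · exact hD _ _ (single_mem_ldeg S x) U h1

theorem edeg_mul {d e : ℤ} {D F : E n} (hD : D ∈ edeg n d) (hF : F ∈ edeg n e) :
    D * F ∈ edeg n (d + e) := by
  intro m h hh
  have := hD _ _ (hF _ _ hh)
  rw [Module.End.mul_apply]
  convert this using 1
  congr 1; ring

theorem epar_mul {d e : ZMod 2} {D F : E n} (hD : D ∈ epar n d) (hF : F ∈ epar n e) :
    D * F ∈ epar n (d + e) := by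
  intro m h hh
  have := hD _ _ (hF _ _ hh)
  rw [Module.End.mul_apply]
  convert this using 1
  congr 1; ring

theorem pd_mem_edeg (i : Fin n) : pd n i ∈ edeg n (-1) := by
  intro m h hh S hS
  rw [pd_apply]
  split_ifs with hi
  · rfl
  · rw [hh, mul_zero]
    rw [Finset.card_insert_of_notMem hi]
    intro h1; apply hS; push_cast at h1; omega

theorem par_mem_edeg : par n ∈ edeg n 0 := by
  intro m h hh S hS
  rw [par_apply, hh, mul_zero]
  simpa using hS

theorem mulOp_mem_edeg {m : ℤ} {h : Lambda n} (hh : h ∈ ldeg n m) : mulOp n h ∈ edeg n m := by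
  intro k g hg U hU
  rw [mulOp_apply]
  apply Finset.sum_eq_zero
  intro S hS
  by_cases h1 : (S.card : ℤ) = m
  · rw [hg (U \ S), mul_zero]
    intro h2
    apply hU
    rw [← Finset.card_sdiff_add_card_eq_card (Finset.mem_powerset.mp hS)]
    push_cast; omega
  · rw [hh S h1]; ring

theorem edeg_congr {d e : ℤ} {D : E n} (hD : D ∈ edeg n d) (h : d = e) : D ∈ edeg n e := h ▸ hD

theorem DH_mem_edeg {m : ℤ} {g : Lambda n} (hg : g ∈ ldeg n m) : DHmap n g ∈ edeg n (m - 2) := by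
  rw [DH_def]
  apply Submodule.sum_mem
  intro k _
  have h1 : pd n k (par n g) ∈ ldeg n (m + 0 + -1) := pd_mem_edeg k _ _ (par_mem_edeg _ _ hg)
  exact edeg_congr (edeg_mul (mulOp_mem_edeg h1) (pd_mem_edeg _)) (by ring)

theorem DH_mem_Hn {m : ℤ} {g : Lambda n} (hg : g ∈ ldeg n m) (hm : m ≠ n) : DHmap n g ∈ Hn n := by
  refine ⟨g, ?_, rfl⟩
  show g Finset.univ = 0
  apply hg
  simpa using hm.symm

theorem par_conj {p : ZMod 2} {D : E n} (hD : D ∈ epar n p) : par n * D * par n = sgn p • D := by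
  apply LinearMap.pi_ext
  intro S x
  have e : par n (Pi.single S x) = msign S.card • (Pi.single S x : Lambda n) := by
    funext T
    rw [par_apply, Pi.smul_apply, smul_eq_mul, Pi.single_apply]
    split_ifs with h
    · rw [h]
    · simp
  rw [Module.End.mul_apply, Module.End.mul_apply, e, map_smul, map_smul]
  funext U
  rw [Pi.smul_apply, par_apply, LinearMap.smul_apply, Pi.smul_apply, smul_eq_mul, smul_eq_mul]
  by_cases hU : (U.card : ZMod 2) = S.card + p
  · have : msign S.card * msign U.card = sgn p := by
      rw [← msign_add]
      have h2 : ((S.card + U.card : ℕ) : ZMod 2) = ((p.val : ℕ) : ZMod 2) := by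
        push_cast; rw [hU, ← add_assoc, CharTwo.add_self_eq_zero, zero_add]; simp
      have h3 := (ZMod.natCast_eq_natCast_iff' _ _ _).mp h2
      unfold msign sgn
      rw [neg_one_pow_eq_pow_mod_two, h3, ← neg_one_pow_eq_pow_mod_two]
    rw [← mul_assoc, this]
  · rw [hD _ _ (single_mem_lpar S x) U hU]; simp

theorem sgn_mul_cases (α β : ZMod 2) :
    (β = 0 ∧ sgn β = 1 ∧ sgn (α * β) = 1) ∨ (β = 1 ∧ sgn β = -1 ∧ sgn (α * β) = sgn α) := by
  revert α β; intro α β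
  fin_cases β
  · left
    have h0 : sgn (0 : ZMod 2) = 1 := by rw [sgn, ZMod.val_zero, pow_zero]
    refine ⟨rfl, h0, ?_⟩
    show sgn (α * 0) = 1
    rw [mul_zero, h0]
  · right; refine ⟨rfl, ?_, ?_⟩
    · show (-1 : ℂ) ^ (1 : ZMod 2).val = -1
      simp [ZMod.val_one]
    · show sgn (α * 1) = sgn α
      rw [mul_one]

theorem sb_hom {α β : ZMod 2} {D F : E n} (hD : D ∈ epar n α) (hF : F ∈ epar n β) :
    sbL n D F = D * F - sgn (α * β) • (F * D) := by
  rw [sbL_def, par_conj hD, par_conj hF]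
  rcases sgn_mul_cases α β with ⟨-, h1, h2⟩ | ⟨-, h1, h2⟩
  · rw [h1, h2]
    simp only [one_smul, sub_self, add_mul, zero_mul]
    module
  · rw [h1, h2]
    have e : F * (sgn α • D) = sgn α • (F * D) := by
      apply LinearMap.ext; intro g; simp [Module.End.mul_apply]
    have e1 : F + (-1 : ℂ) • F = 0 := by module
    have e2 : F - (-1 : ℂ) • F = (2 : ℂ) • F := by module
    have e3 : ((2 : ℂ) • F) * (sgn α • D) = (2 : ℂ) • (sgn α • (F * D)) := by
      rw [← e]; rfl
    rw [e1, e2, e3, zero_mul, zero_add, smul_smul (2⁻¹ : ℂ)]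
    norm_num

theorem epar_sb {α β : ZMod 2} {D F : E n} (hD : D ∈ epar n α) (hF : F ∈ epar n β) :
    sbL n D F ∈ epar n (α + β) := by
  rw [sb_hom hD hF]
  exact Submodule.sub_mem _ (epar_mul hD hF) (Submodule.smul_mem _ _ (add_comm β α ▸ epar_mul hF hD))

theorem edeg_sb {d e : ℤ} {D F : E n} (hD : D ∈ edeg n d) (hF : F ∈ edeg n e) :
    sbL n D F ∈ edeg n (d + e) := by
  rw [sb_hom (edeg_le_epar hD) (edeg_le_epar hF)]
  exact Submodule.sub_mem _ (edeg_mul hD hF) (Submodule.smul_mem _ _ (add_comm e d ▸ edeg_mul hF hD))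

theorem sb_one {d e : ℤ} {D F : E n} (hD : D ∈ edeg n d) (hF : F ∈ edeg n e)
    (h1 : D (mono n ∅) = 0) (h2 : F (mono n ∅) = 0) : sbL n D F (mono n ∅) = 0 := by
  rw [sb_hom (edeg_le_epar hD) (edeg_le_epar hF)]
  simp [Module.End.mul_apply, h1, h2]

theorem sgn_add (a b : ZMod 2) : sgn (a + b) = sgn a * sgn b := by
  unfold sgn
  rw [← pow_add, ZMod.val_add, ← neg_one_pow_eq_pow_mod_two]

theorem sgn_sq (a : ZMod 2) : sgn a * sgn a = 1 := by
  rw [← sgn_add, CharTwo.add_self_eq_zero]; simp [sgn]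

theorem jacobi2 {α β γ : ZMod 2} {x y z : E n} (hx : x ∈ epar n α) (hy : y ∈ epar n β)
    (hz : z ∈ epar n γ) :
    sbL n x (sbL n y z) = sbL n (sbL n x y) z + sgn (α * β) • sbL n y (sbL n x z) := by
  rw [sb_hom hx (epar_sb hy hz), sb_hom (epar_sb hx hy) hz, sb_hom hy (epar_sb hx hz),
    sb_hom hx hy, sb_hom hy hz, sb_hom hx hz]
  simp only [mul_add, add_mul, sgn_add, mul_sub, sub_mul, smul_sub, smul_smul, smul_mul_assoc,
    mul_smul_comm, mul_assoc]
  rw [mul_comm β α]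
  have := sgn_sq (α * β)
  generalize sgn (α * β) = a at *
  generalize sgn (α * γ) = b at *
  generalize sgn (β * γ) = c at *
  match_scalars <;> first | ring1 | linear_combination (-b * c) * this | linear_combination c * this

theorem jacobi1 {α β γ : ZMod 2} {x y z : E n} (hx : x ∈ epar n α) (hy : y ∈ epar n β)
    (hz : z ∈ epar n γ) :
    sbL n (sbL n x y) z = sbL n x (sbL n y z) + sgn (β * γ) • sbL n (sbL n x z) y := by
  rw [sb_hom hx (epar_sb hy hz), sb_hom (epar_sb hx hy) hz, sb_hom (epar_sb hx hz) hy,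
    sb_hom hx hy, sb_hom hy hz, sb_hom hx hz]
  simp only [mul_add, add_mul, sgn_add, mul_sub, sub_mul, smul_sub, smul_smul, smul_mul_assoc,
    mul_smul_comm, mul_assoc]
  rw [mul_comm γ β]
  have := sgn_sq (β * γ)
  generalize sgn (α * β) = a at *
  generalize sgn (α * γ) = b at *
  generalize sgn (β * γ) = c at *
  match_scalars <;> first | ring1 | linear_combination a * this | linear_combination (-a * b) * this

theorem ldeg_zero {h : Lambda n} (hh : h ∈ ldeg n 0) : h = h ∅ • mono n ∅ := by
  funext U
  by_cases hU : U = ∅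
  · subst hU; simp [mono]
  · rw [hh U (by simpa using hU)]; simp [mono, hU]

theorem pd_zero {h : Lambda n} (hh : ∀ k, pd n k h = 0) (U : Finset (Fin n)) (hU : U ≠ ∅) :
    h U = 0 := by
  obtain ⟨k, hk⟩ := Finset.nonempty_iff_ne_empty.mpr hU
  have := congrFun (hh k) (U.erase k)
  rw [pd_apply, if_neg (Finset.notMem_erase _ _), Finset.insert_erase hk, Pi.zero_apply] at this
  rcases mul_eq_zero.mp this with h1 | h1
  · unfold msign at h1; simp at h1
  · exact h1

/-- Transitivity. -/
theorem trans_zero {d : ℤ} (hd : 0 ≤ d) {D : E n} (hD : D ∈ edeg n d) (h1 : D (mono n ∅) = 0)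
    (h2 : ∀ k, sbL n (pd n k) D = 0) : D = 0 := by
  have key : ∀ m : ℕ, ∀ h ∈ ldeg n (m : ℤ), D h = 0 := by
    intro m
    induction m with
    | zero =>
      intro h hh
      rw [ldeg_zero hh, map_smul, h1, smul_zero]
    | succ m ih =>
      intro h hh
      have hk : ∀ k, pd n k (D h) = 0 := by
        intro k
        have h3 := h2 k
        rw [sb_pd, sub_eq_zero] at h3
        have h4 := congrArg (fun F : E n => F h) h3
        simp only [Module.End.mul_apply] at h4
        rw [h4, ih, map_zero]
        have h5 : par n (pd n k h) ∈ ldeg n (((m + 1 : ℕ) : ℤ) + -1 + 0) :=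
          par_mem_edeg _ _ (pd_mem_edeg k _ _ hh)
        have e : (((m + 1 : ℕ) : ℤ) + -1 + 0) = m := by push_cast; ring
        rwa [e] at h5
      funext U
      by_cases hU : U = ∅
      · subst hU
        apply hD _ _ hh
        push_cast; simp; omega
      · exact pd_zero hk U hU
  apply LinearMap.pi_ext
  intro S x
  rw [key _ _ (single_mem_ldeg S x)]; rfl

theorem cidx_invol : Function.Involutive (cidx n) := by
  intro i
  apply Fin.ext
  have := i.isLt
  simp only [cidx]
  split_ifs <;> omega

/-- Elements of `H(n)` are determined by their values on generators. -/
theorem Hn_repr {D : E n} (hD : D ∈ Hn n) : D = ∑ i, mulOp n (D (mono n {i})) * pd n i := by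
  obtain ⟨g, -, rfl⟩ := hD
  have hc : Function.Involutive (cidx n) := cidx_invol
  have e : ∀ i, DHmap n g (mono n {i}) = pd n (cidx n i) (par n g) := by
    intro i
    rw [DH_def, LinearMap.sum_apply, Finset.sum_eq_single (cidx n i)]
    · rw [Module.End.mul_apply, hc i, pd_mono_single, if_pos rfl, mulOp_apply_one]
    · intro k _ hk
      have : cidx n k ≠ i := fun h => hk (by rw [← h, hc k])
      rw [Module.End.mul_apply, pd_mono_single, if_neg this, map_zero]
    · simp
  simp only [e]
  rw [DH_def]
  apply Finset.sum_nbij' (cidx n) (cidx n) <;> simp [hc _]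
  

end Aux2

section Aux3

variable {n}

theorem par_mono_single (i : Fin n) : par n (mono n {i}) = - mono n {i} := by
  funext T
  rw [par_apply, Pi.neg_apply]
  by_cases h : T = {i}
  · subst h; simp [mono, msign]
  · simp [mono, h]

theorem DH_mono_single (i : Fin n) : DHmap n (mono n {i}) = - pd n (cidx n i) := by
  rw [DH_def, par_mono_single, Finset.sum_eq_single i]
  · rw [map_neg, pd_mono_single, if_pos rfl, map_neg, mulOp_one, e_neg_mul, one_mul]
  · intro k _ hk
    rw [map_neg, pd_mono_single, if_neg hk, neg_zero, map_zero, zero_mul]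
  · simp

theorem mono_single_ldeg (i : Fin n) : mono n {i} ∈ ldeg n 1 := by
  have := mono_mem_ldeg ({i} : Finset (Fin n))
  simpa using this

theorem pd_mem_Hn (hn : 4 < n) (i : Fin n) : pd n i ∈ Hn n := by
  have : pd n i = - DHmap n (mono n {cidx n i}) := by
    rw [DH_mono_single, neg_neg, cidx_invol i]
  rw [this]
  exact Submodule.neg_mem _ (DH_mem_Hn (mono_single_ldeg _) (by omega))

/-- constants -/
def cp : ℂ := (1 - Complex.I) / 2
/-- constants -/
def cq : ℂ := (1 + Complex.I) / 2

theorem cpq : 2 * cp * cq = 1 := by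
  unfold cp cq
  linear_combination (-1 / 2 : ℂ) * Complex.I_mul_I

theorem cpp : cp * cp + cq * cq = 0 := by
  unfold cp cq
  linear_combination (1 / 2 : ℂ) * Complex.I_mul_I

variable (n) in
/-- orthonormal basis of the degree `-1` part -/
def PP (k : Fin n) : E n := cp • pd n k + cq • pd n (cidx n k)

variable (n) in
/-- dual linear forms -/
def YY (k : Fin n) : Lambda n := cp • mono n {cidx n k} + cq • mono n {k}

variable (n) in
/-- rotation generators -/
def BB (i j : Fin n) : E n := DHmap n (mulOp n (YY n j) (YY n i))

theorem pd_eq_PP (k : Fin n) : pd n k = cq • PP n k + cp • PP n (cidx n k) := by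
  unfold PP
  rw [cidx_invol k]
  have e : cq • (cp • pd n k + cq • pd n (cidx n k)) + cp • (cp • pd n (cidx n k) + cq • pd n k) =
    (2 * cp * cq) • pd n k + (cp * cp + cq * cq) • pd n (cidx n k) := by module
  rw [e, cpq, cpp]; simp

theorem mono_eq_YY (k : Fin n) : mono n {k} = cp • YY n k + cq • YY n (cidx n k) := by
  unfold YY
  rw [cidx_invol k]
  have e : ∀ X Y : Lambda n, cp • (cp • X + cq • Y) + cq • (cp • Y + cq • X) =
    (2 * cp * cq) • Y + (cp * cp + cq * cq) • X := by intro X Y; module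
  rw [e, cpq, cpp]; simp

theorem PP_YY (k j : Fin n) : PP n k (YY n j) = if k = j then mono n ∅ else 0 := by
  unfold PP YY
  simp only [LinearMap.add_apply, LinearMap.smul_apply, map_add, map_smul, pd_mono_single]
  have h1 : cidx n k = cidx n j ↔ k = j := cidx_invol.injective.eq_iff
  have h2 : cidx n k = j ↔ k = cidx n j := by
    constructor
    · rintro rfl; rw [cidx_invol]
    · rintro rfl; rw [cidx_invol]
  simp only [h1, h2]
  have e : ∀ X Y : Lambda n, cp • (cp • X + cq • Y) + cq • (cp • Y + cq • X) =
    (2 * cp * cq) • Y + (cp * cp + cq * cq) • X := by intro X Y; module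
  rw [e, cpq, cpp]; simp

theorem YY_ldeg (k : Fin n) : YY n k ∈ ldeg n 1 :=
  Submodule.add_mem _ (Submodule.smul_mem _ _ (mono_single_ldeg _))
    (Submodule.smul_mem _ _ (mono_single_ldeg _))

theorem PP_edeg (k : Fin n) : PP n k ∈ edeg n (-1) :=
  Submodule.add_mem _ (Submodule.smul_mem _ _ (pd_mem_edeg _))
    (Submodule.smul_mem _ _ (pd_mem_edeg _))

theorem PP_Hn (hn : 4 < n) (k : Fin n) : PP n k ∈ Hn n :=
  Submodule.add_mem _ (Submodule.smul_mem _ _ (pd_mem_Hn hn _))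
    (Submodule.smul_mem _ _ (pd_mem_Hn hn _))

theorem PP_epar (k : Fin n) : PP n k ∈ epar n 1 := by
  have := edeg_le_epar (PP_edeg k)
  have e : ((-1 : ℤ) : ZMod 2) = 1 := by decide
  rwa [e] at this

theorem pd_epar (k : Fin n) : pd n k ∈ epar n 1 := by
  have := edeg_le_epar (pd_mem_edeg k)
  have e : ((-1 : ℤ) : ZMod 2) = 1 := by decide
  rwa [e] at this

theorem YYm_ldeg (i j : Fin n) : mulOp n (YY n j) (YY n i) ∈ ldeg n 2 := 
  mulOp_mem_edeg (YY_ldeg j) _ _ (YY_ldeg i)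

theorem BB_edeg (i j : Fin n) : BB n i j ∈ edeg n 0 := DH_mem_edeg (YYm_ldeg i j)

theorem BB_Hn (hn : 4 < n) (i j : Fin n) : BB n i j ∈ Hn n :=
  DH_mem_Hn (YYm_ldeg i j) (by omega)

theorem BB_epar (i j : Fin n) : BB n i j ∈ epar n 0 := by
  have := edeg_le_epar (BB_edeg i j)
  simpa using this

theorem DH_YY (k : Fin n) : DHmap n (YY n k) = - PP n k := by
  unfold YY PP
  rw [map_add, map_smul, map_smul, DH_mono_single, DH_mono_single, cidx_invol]
  module

theorem par_YY (k : Fin n) : par n (YY n k) = - YY n k := by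
  unfold YY
  rw [map_add, map_smul, map_smul, par_mono_single, par_mono_single]
  module

theorem PP_leib (k : Fin n) (h g : Lambda n) :
    PP n k (mulOp n h g) = mulOp n (PP n k h) g + mulOp n (par n h) (PP n k g) := by
  have l1 := fun i => congrArg (fun D : E n => D g) (leib i h)
  simp only [Module.End.mul_apply, LinearMap.add_apply] at l1
  unfold PP
  simp only [LinearMap.add_apply, LinearMap.smul_apply, map_add, map_smul, l1]
  module

theorem sb_PP_DH (k : Fin n) (g : Lambda n) : sbL n (PP n k) (DHmap n g) = DHmap n (PP n k g) := by
  unfold PP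
  simp only [LinearMap.add_apply, LinearMap.smul_apply, map_add, map_smul, sb_pd_DH]

theorem sb_PP_BB (i j k : Fin n) : sbL n (PP n k) (BB n i j) =
    (if k = i then PP n j else 0) - (if k = j then PP n i else 0) := by
  unfold BB
  rw [sb_PP_DH, PP_leib, PP_YY, PP_YY, par_YY]
  split_ifs <;> simp [mulOp_one, mulOp_apply_one, DH_YY] <;> abel

theorem sgn_zero : sgn 0 = 1 := by rw [sgn, ZMod.val_zero, pow_zero]

theorem sb_BB_comm {p : ZMod 2} (i j : Fin n) {v : E n} (hv : v ∈ epar n p) :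
    sbL n (BB n i j) v = - sbL n v (BB n i j) := by
  rw [sb_hom (BB_epar i j) hv, sb_hom hv (BB_epar i j), mul_zero, zero_mul, sgn_zero]
  module

theorem sb_BB_PP (i j k : Fin n) : sbL n (BB n i j) (PP n k) =
    (if k = j then PP n i else 0) - (if k = i then PP n j else 0) := by
  rw [sb_BB_comm i j (PP_epar k), sb_PP_BB]; abel

theorem trans_zero' {d : ℤ} (hd : 0 ≤ d) {D : E n} (hD : D ∈ edeg n d) (h1 : D (mono n ∅) = 0)
    (h2 : ∀ k, sbL n (PP n k) D = 0) : D = 0 := by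
  apply trans_zero hd hD h1
  intro k
  rw [pd_eq_PP, map_add, map_smul, map_smul, LinearMap.add_apply, LinearMap.smul_apply,
    LinearMap.smul_apply, h2, h2]; simp

theorem BB_one (i j : Fin n) : BB n i j (mono n ∅) = 0 := DH_one _

theorem BB_anti (i j : Fin n) : BB n j i = - BB n i j := by
  rw [eq_neg_iff_add_eq_zero]
  apply trans_zero' le_rfl (Submodule.add_mem _ (BB_edeg _ _) (BB_edeg _ _))
  · rw [LinearMap.add_apply, BB_one, BB_one, add_zero]
  · intro k
    rw [map_add, sb_PP_BB, sb_PP_BB]; abel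

theorem BB_self (i : Fin n) : BB n i i = 0 := by
  apply trans_zero' le_rfl (BB_edeg _ _) (BB_one _ _)
  intro k
  rw [sb_PP_BB]; abel

theorem BB_comm (i j k : Fin n) (hij : i ≠ j) (hik : i ≠ k) (hjk : j ≠ k) :
    sbL n (BB n i k) (BB n k j) = BB n i j := by
  rw [← sub_eq_zero]
  apply trans_zero' le_rfl (Submodule.sub_mem _ (edeg_sb (BB_edeg _ _) (BB_edeg _ _)) (BB_edeg _ _))
  · rw [LinearMap.sub_apply, BB_one, sb_one (BB_edeg _ _) (BB_edeg _ _) (BB_one _ _) (BB_one _ _),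
      sub_zero]
  · intro m
    rw [map_sub, jacobi2 (PP_epar m) (BB_epar i k) (BB_epar k j), mul_zero, sgn_zero, one_smul,
      sb_PP_BB, sb_PP_BB, sb_PP_BB]
    by_cases h1 : m = i
    · subst h1
      simp [hij, hik, sb_PP_BB, sb_BB_PP, hjk.symm, hjk, hik.symm, hij.symm]
    · by_cases h2 : m = j
      · subst h2
        simp [hij, hik, sb_PP_BB, sb_BB_PP, hjk.symm, hjk, hik.symm, hij.symm]
      · by_cases h3 : m = k
        · subst h3
          simp [hij, hik, sb_PP_BB, sb_BB_PP, hjk.symm, hjk, hik.symm, hij.symm]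
        · simp [h1, h2, h3]

variable (n) in
/-- coordinates on the degree `-1` part -/
def kap (l : Fin n) : E n →ₗ[ℂ] ℂ where
  toFun D := D (YY n l) ∅
  map_add' := by intro D F; rfl
  map_smul' := by intro c D; rfl

theorem kap_PP (l k : Fin n) : kap n l (PP n k) = if l = k then 1 else 0 := by
  show PP n k (YY n l) ∅ = _
  rw [PP_YY]
  by_cases h : k = l
  · subst h; simp [mono]
  · simp [h, Ne.symm h]

theorem repr_pd {v : E n} (hv : v ∈ Hn n) (hd : v ∈ edeg n (-1)) :
    ∃ c : Fin n → ℂ, v = ∑ i, c i • pd n i := by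
  refine ⟨fun i => v (mono n {i}) ∅, ?_⟩
  conv_lhs => rw [Hn_repr hv]
  apply Finset.sum_congr rfl
  intro i _
  have h1 : v (mono n {i}) ∈ ldeg n 0 := hd _ _ (mono_single_ldeg i)
  rw [ldeg_zero h1, map_smul, mulOp_one, smul_mul_assoc, one_mul]
  try simp [mono]

theorem Hn_neg_two {v : E n} (hv : v ∈ Hn n) (hd : v ∈ edeg n (-2)) : v = 0 := by
  rw [Hn_repr hv]
  apply Finset.sum_eq_zero
  intro i _
  have h1 : v (mono n {i}) ∈ ldeg n (1 + -2) := hd _ _ (mono_single_ldeg i)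
  have : v (mono n {i}) = 0 := by
    funext U; apply h1; omega
  rw [this, map_zero, zero_mul]

theorem repr_PP {v : E n} (hv : v ∈ Hn n) (hd : v ∈ edeg n (-1)) :
    v = ∑ l, kap n l v • PP n l := by
  have key : ∀ i : Fin n, pd n i = ∑ l, kap n l (pd n i) • PP n l := by
    intro i
    have e : ∀ l, kap n l (pd n i) • PP n l = (if l = i then cq • PP n l else 0) +
        (if l = cidx n i then cp • PP n l else 0) := by
      intro l
      rw [pd_eq_PP i, map_add, map_smul, map_smul, kap_PP, kap_PP, add_smul]
      split_ifs <;> simp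
    simp only [e, Finset.sum_add_distrib, Finset.sum_ite_eq', Finset.mem_univ, if_true]
    exact pd_eq_PP i
  obtain ⟨c, rfl⟩ := repr_pd hv hd
  simp only [map_sum, map_smul, Finset.sum_smul]
  rw [Finset.sum_comm]
  apply Finset.sum_congr rfl
  intro i _
  conv_lhs => rw [key i]
  rw [Finset.smul_sum]
  simp [smul_smul]

theorem kap_sb_BB (i j l : Fin n) {v : E n} (hv : v ∈ Hn n) (hd : v ∈ edeg n (-1)) :
    kap n l (sbL n (BB n i j) v) =
      (if l = i then kap n j v else 0) - (if l = j then kap n i v else 0) := by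
  conv_lhs => rw [repr_PP hv hd]
  have e : ∀ m, kap n l (sbL n (BB n i j) (kap n m v • PP n m)) =
      (if m = j then (if l = i then kap n m v else 0) else 0) -
      (if m = i then (if l = j then kap n m v else 0) else 0) := by
    intro m
    rw [map_smul, map_smul, sb_BB_PP, map_sub, smul_eq_mul, mul_sub]
    congr 1
    · split_ifs <;> simp_all [kap_PP]
    · split_ifs <;> simp_all [kap_PP]
  rw [map_sum, map_sum, Finset.sum_congr rfl (fun m _ => e m), Finset.sum_sub_distrib]
  simp

theorem mulOp_mono {a b : Fin n} (hab : a ≠ b) :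
    ∃ c : ℂ, mono n {a, b} = c • mulOp n (mono n {a}) (mono n {b}) := by
  have hd : ({a, b} : Finset (Fin n)) \ {a} = {b} := by
    ext x; simp only [Finset.mem_sdiff, Finset.mem_insert, Finset.mem_singleton]
    constructor
    · tauto
    · rintro rfl; exact ⟨Or.inr rfl, hab.symm⟩
  refine ⟨msign (inversions n {a} {b}), ?_⟩
  funext U
  rw [Pi.smul_apply, mulOp_apply, smul_eq_mul]
  by_cases hU : U = {a, b}
  · subst hU
    rw [Finset.sum_eq_single {a}]
    · rw [hd]; simp [mono, msign_mul_self]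
    · intro S _ hS; simp [mono, hS]
    · intro h; exfalso; apply h; simp
  · rw [Finset.sum_eq_zero]
    · simp [mono, hU]
    · intro S hS
      by_cases h1 : S = {a}
      · by_cases h2 : U \ S = {b}
        · exfalso; apply hU
          rw [← Finset.sdiff_union_of_subset (Finset.mem_powerset.mp hS), h2, h1]
          ext x; simp; tauto
        · simp [mono, h2]
      · simp [mono, h1]

theorem DH_two_span {h : Lambda n} (hh : h ∈ ldeg n 2) :
    DHmap n h ∈ Submodule.span ℂ (Set.range fun p : Fin n × Fin n => BB n p.1 p.2) := by
  rw [lambda_sum h, map_sum]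
  apply Submodule.sum_mem
  intro S _
  rw [map_smul]
  by_cases hS : S.card = 2
  · apply Submodule.smul_mem
    obtain ⟨a, b, hab, rfl⟩ := Finset.card_eq_two.mp hS
    obtain ⟨c, hc⟩ := mulOp_mono hab
    rw [hc, map_smul]
    apply Submodule.smul_mem
    have hB : ∀ i j, DHmap n (mulOp n (YY n j) (YY n i)) ∈
        Submodule.span ℂ (Set.range fun p : Fin n × Fin n => BB n p.1 p.2) :=
      fun i j => Submodule.subset_span ⟨(i, j), rfl⟩
    rw [mono_eq_YY a, mono_eq_YY b]
    simp only [map_add, map_smul, LinearMap.add_apply, LinearMap.smul_apply, smul_add]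
    repeat' first | apply Submodule.add_mem | apply Submodule.smul_mem | apply hB
  · rw [hh S (by exact_mod_cast hS), zero_smul]; exact Submodule.zero_mem _

end Aux3

section Aux4

variable {n}

theorem DH_zero_deg {h : Lambda n} (hh : h ∈ ldeg n 0) : DHmap n h = 0 := by
  rw [ldeg_zero hh, map_smul, DH_def]
  have : par n (mono n ∅) = mono n ∅ := by
    funext T
    rw [par_apply]
    by_cases hT : T = ∅
    · subst hT; simp [mono, msign]
    · simp [mono, hT]
  simp [this, pd_mono_empty]

theorem sgn_ne_zero (p : ZMod 2) : sgn p ≠ 0 := by unfold sgn; simp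

theorem zero_lemma (hn : 4 < n) (g : E n →ₗ[ℂ] E n →ₗ[ℂ] E n)
    (hdeg : ∀ j k : ℤ, ∀ x ∈ Hn n ⊓ edeg n j, ∀ y ∈ Hn n ⊓ edeg n k,
      g x y ∈ edeg n (j + k) ∧ g x y (mono n ∅) = 0)
    (eq1 : ∀ (α β γ : ZMod 2), ∀ x ∈ Hn n ⊓ epar n α, ∀ y ∈ Hn n ⊓ epar n β,
      ∀ z ∈ Hn n ⊓ epar n γ,
      g (sbL n x y) z = sbL n x (g y z) + sgn (β * γ) • sbL n (g x z) y)
    (eq2 : ∀ (α β γ : ZMod 2), ∀ x ∈ Hn n ⊓ epar n α, ∀ y ∈ Hn n ⊓ epar n β,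
      ∀ z ∈ Hn n ⊓ epar n γ,
      g x (sbL n y z) = sbL n (g x y) z + sgn (α * β) • sbL n y (g x z))
    (b0 : ∀ i j, g (pd n i) (pd n j) = 0)
    (b1 : ∀ h ∈ ldeg n 2, ∀ i, g (DHmap n h) (pd n i) = 0)
    (b2 : ∀ h ∈ ldeg n 2, ∀ i, g (pd n i) (DHmap n h) = 0) :
    ∀ x ∈ Hn n, ∀ y ∈ Hn n, g x y = 0 := by
  have pdm : ∀ i, pd n i ∈ Hn n ⊓ epar n 1 := fun i => ⟨pd_mem_Hn hn i, pd_epar i⟩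
  have pdd : ∀ i, pd n i ∈ Hn n ⊓ edeg n (-1) := fun i => ⟨pd_mem_Hn hn i, pd_mem_edeg i⟩
  have DHd : ∀ (m : ℤ) h, h ∈ ldeg n m → m ≠ n → DHmap n h ∈ Hn n ⊓ edeg n (m - 2) :=
    fun m h hh hm => ⟨DH_mem_Hn hh hm, DH_mem_edeg hh⟩
  have DHp : ∀ (m : ℤ) h, h ∈ ldeg n m → m ≠ n → DHmap n h ∈ Hn n ⊓ epar n ((m - 2 : ℤ) : ZMod 2) :=
    fun m h hh hm => ⟨DH_mem_Hn hh hm, edeg_le_epar (DH_mem_edeg hh)⟩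
  have pdl : ∀ (m : ℕ) (h : Lambda n) k, h ∈ ldeg n ((m + 1 : ℕ) : ℤ) → pd n k h ∈ ldeg n (m : ℤ) := by
    intro m h k hh
    have := pd_mem_edeg k _ _ hh
    have e : (((m + 1 : ℕ) : ℤ) + -1) = m := by push_cast; ring
    rwa [e] at this
  -- first argument of positive degree against `∂`
  have A : ∀ m : ℕ, m + 2 < n → ∀ h ∈ ldeg n ((m + 2 : ℕ) : ℤ), ∀ i, g (DHmap n h) (pd n i) = 0 := by
    intro m
    induction m with
    | zero => intro _ h hh i; exact b1 h hh i
    | succ m ih =>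
      intro hm h hh i
      have hne : ((m + 1 + 2 : ℕ) : ℤ) ≠ n := by omega
      obtain ⟨d1, d2⟩ := hdeg _ _ _ (DHd _ h hh hne) _ (pdd i)
      refine trans_zero ?_ d1 d2 ?_
      · push_cast; omega
      · intro k
        have := eq1 _ _ _ _ (pdm k) _ (DHp _ h hh hne) _ (pdm i)
        rw [sb_pd_DH, b0, map_zero, LinearMap.zero_apply, smul_zero, add_zero,
          ih (by omega) _ (pdl (m + 2) h k hh) i] at this
        exact this.symm
  -- second argument
  have B : ∀ (j : ℤ) (p : ZMod 2) (x : E n), x ∈ Hn n ⊓ edeg n j → x ∈ Hn n ⊓ epar n p →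
      (∀ i, g x (pd n i) = 0) → (j < 0 → j = -1 ∧ ∀ h ∈ ldeg n 2, g x (DHmap n h) = 0) →
      ∀ m : ℕ, m < n → ∀ h ∈ ldeg n (m : ℤ), g x (DHmap n h) = 0 := by
    intro j p x hx hxp hx1 hx2 m
    induction m with
    | zero => intro _ h hh; rw [DH_zero_deg hh, map_zero]
    | succ m ih =>
      intro hm h hh
      have hne : ((m + 1 : ℕ) : ℤ) ≠ n := by omega
      have hD := DHd _ h hh hne
      by_cases hm0 : m = 0
      · subst hm0
        obtain ⟨c, hc⟩ := repr_pd hD.1 (edeg_congr hD.2 (by norm_num))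
        rw [hc, map_sum]
        apply Finset.sum_eq_zero
        intro i _
        rw [map_smul, hx1, smul_zero]
      by_cases hj : j < 0 ∧ m = 1
      · obtain ⟨hj, rfl⟩ := hj
        exact (hx2 hj).2 h hh
      obtain ⟨d1, d2⟩ := hdeg _ _ _ hx _ hD
      refine trans_zero ?_ d1 d2 ?_
      · by_cases hj0 : j < 0
        · have := (hx2 hj0).1
          have : m ≠ 1 := fun h => hj ⟨hj0, h⟩
          push_cast; omega
        · push_cast; omega
      · intro k
        have := eq2 _ _ _ _ hxp _ (pdm k) _ (DHp _ h hh hne)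
        rw [sb_pd_DH, hx1, map_zero, LinearMap.zero_apply, zero_add,
          ih (by omega) _ (pdl m h k hh)] at this
        exact (smul_eq_zero.mp this.symm).resolve_left (sgn_ne_zero _)
  have C : ∀ m m' : ℕ, m < n → m' < n → ∀ h ∈ ldeg n (m : ℤ), ∀ h' ∈ ldeg n (m' : ℤ),
      g (DHmap n h) (DHmap n h') = 0 := by
    intro m m' hm hm' h hh h' hh'
    have hne : (m : ℤ) ≠ n := by omega
    by_cases h0 : m = 0
    · subst h0; rw [DH_zero_deg hh, map_zero, LinearMap.zero_apply]
    by_cases h1 : m = 1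
    · subst h1
      have hD := DHd _ h hh hne
      obtain ⟨c, hc⟩ := repr_pd hD.1 (edeg_congr hD.2 (by norm_num))
      rw [hc, map_sum, LinearMap.sum_apply]
      apply Finset.sum_eq_zero
      intro i _
      rw [map_smul, LinearMap.smul_apply,
        B (-1) _ _ (pdd i) (pdm i) (b0 i) (fun _ => ⟨rfl, fun h hh => b2 h hh i⟩) m' hm' h' hh',
        smul_zero]
    · obtain ⟨k, rfl⟩ : ∃ k, m = k + 2 := ⟨m - 2, by omega⟩
      refine B _ _ _ (DHd _ h hh hne) (DHp _ h hh hne) (A k hm h hh) ?_ m' hm' h' hh'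
      intro hneg; push_cast at hneg; omega
  have lt : ∀ S : Finset (Fin n), S ≠ Finset.univ → S.card < n := by
    intro S hS
    by_contra hc
    apply hS
    rw [← Finset.card_eq_iff_eq_univ]
    have h1 := Finset.card_le_univ S
    simp at h1 ⊢
    omega
  rintro x ⟨u, hu, rfl⟩ y ⟨v, hv, rfl⟩
  have hu : u Finset.univ = 0 := hu
  have hv : v Finset.univ = 0 := hv
  rw [lambda_sum u, map_sum, map_sum, LinearMap.sum_apply]
  apply Finset.sum_eq_zero
  intro S _
  rw [map_smul, map_smul, LinearMap.smul_apply]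
  by_cases hS : S = Finset.univ
  · rw [hS, hu, zero_smul]
  rw [lambda_sum v, map_sum, map_sum, Finset.sum_eq_zero, smul_zero]
  intro T _
  rw [map_smul, map_smul]
  by_cases hT : T = Finset.univ
  · rw [hT, hv, zero_smul]
  rw [C _ _ (lt S hS) (lt T hT) _ (mono_mem_ldeg S) _ (mono_mem_ldeg T), smul_zero]

theorem Hn_one {x : E n} (hx : x ∈ Hn n) : x (mono n ∅) = 0 := by
  obtain ⟨g, -, rfl⟩ := hx; exact DH_one g

theorem bil_neg_right (f : E n →ₗ[ℂ] E n →ₗ[ℂ] E n) (x y : E n) : f x (-y) = - f x y :=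
  map_neg _ _

theorem bil_neg_left (f : E n →ₗ[ℂ] E n →ₗ[ℂ] E n) (x y : E n) : f (-x) y = - f x y := by
  rw [← neg_one_smul ℂ x, map_smul, LinearMap.smul_apply, neg_one_smul]

theorem bil_ite_right (f : E n →ₗ[ℂ] E n →ₗ[ℂ] E n) (φ : E n →ₗ[ℂ] ℂ) (x y z : E n)
    (p q : Prop) [Decidable p] [Decidable q] :
    φ (f x ((if p then y else 0) - if q then z else 0)) =
      (if p then φ (f x y) else 0) - (if q then φ (f x z) else 0) := by
  rw [sub_eq_add_neg, map_add, bil_neg_right, map_add, map_neg, ← sub_eq_add_neg]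
  by_cases hp : p <;> by_cases hq : q <;> simp only [hp, hq, if_true, if_false, map_zero]

theorem bil_ite_left (f : E n →ₗ[ℂ] E n →ₗ[ℂ] E n) (φ : E n →ₗ[ℂ] ℂ) (x y z : E n)
    (p q : Prop) [Decidable p] [Decidable q] :
    φ (f ((if p then y else 0) - if q then z else 0) x) =
      (if p then φ (f y x) else 0) - (if q then φ (f z x) else 0) := by
  rw [sub_eq_add_neg, map_add, LinearMap.add_apply, bil_neg_left, map_add, map_neg,
    ← sub_eq_add_neg]
  by_cases hp : p <;> by_cases hq : q <;>
    simp only [hp, hq, if_true, if_false, map_zero, LinearMap.zero_apply]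

theorem e_smul_mul (c : ℂ) (x y : E n) : (c • x) * y = c • (x * y) := rfl

theorem sum_lam_aux {V : Type*} [AddCommGroup V] [Module ℂ V] (P : Fin n → V) (lam : ℂ)
    (i j m : Fin n) :
    ∑ l, (lam * ((if m = j ∧ l = i then 1 else 0) - (if m = i ∧ l = j then 1 else 0))) • P l =
      lam • ((if m = j then P i else 0) - (if m = i then P j else 0)) := by
  have e : ∀ l, (lam * ((if m = j ∧ l = i then (1 : ℂ) else 0) -
      (if m = i ∧ l = j then 1 else 0))) • P l =
      (if l = i then (if m = j then lam • P l else 0) else 0) -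
      (if l = j then (if m = i then lam • P l else 0) else 0) := by
    intro l
    rw [mul_sub, sub_smul]
    congr 1
    · by_cases h1 : l = i <;> by_cases h2 : m = j <;> simp [h1, h2]
    · by_cases h1 : l = j <;> by_cases h2 : m = i <;> simp [h1, h2]
  rw [Finset.sum_congr rfl (fun l _ => e l), Finset.sum_sub_distrib, Finset.sum_ite_eq',
    Finset.sum_ite_eq', smul_sub]
  simp only [Finset.mem_univ, if_true, smul_ite, smul_zero]

set_option maxHeartbeats 1000000 in
theorem inner_low (hn : 4 < n) (f : E n →ₗ[ℂ] E n →ₗ[ℂ] E n)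
    (hdeg : ∀ j k : ℤ, ∀ x ∈ Hn n ⊓ edeg n j, ∀ y ∈ Hn n ⊓ edeg n k,
      f x y ∈ Hn n ⊓ edeg n (j + k))
    (eq1 : ∀ (α β γ : ZMod 2), ∀ x ∈ Hn n ⊓ epar n α, ∀ y ∈ Hn n ⊓ epar n β,
      ∀ z ∈ Hn n ⊓ epar n γ,
      f (sbL n x y) z = sbL n x (f y z) + sgn (β * γ) • sbL n (f x z) y)
    (eq2 : ∀ (α β γ : ZMod 2), ∀ x ∈ Hn n ⊓ epar n α, ∀ y ∈ Hn n ⊓ epar n β,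
      ∀ z ∈ Hn n ⊓ epar n γ,
      f x (sbL n y z) = sbL n (f x y) z + sgn (α * β) • sbL n y (f x z)) :
    ∃ lam : ℂ, (∀ i j m, f (BB n i j) (PP n m) = lam • sbL n (BB n i j) (PP n m)) ∧
      ∀ i j m, f (PP n m) (BB n i j) = lam • sbL n (PP n m) (BB n i j) := by
  have Pd : ∀ i, PP n i ∈ Hn n ⊓ edeg n (-1) := fun i => ⟨PP_Hn hn i, PP_edeg i⟩
  have Pp : ∀ i, PP n i ∈ Hn n ⊓ epar n 1 := fun i => ⟨PP_Hn hn i, PP_epar i⟩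
  have Bd : ∀ i j, BB n i j ∈ Hn n ⊓ edeg n 0 := fun i j => ⟨BB_Hn hn i j, BB_edeg i j⟩
  have Bp : ∀ i j, BB n i j ∈ Hn n ⊓ epar n 0 := fun i j => ⟨BB_Hn hn i j, BB_epar i j⟩
  have fa : ∀ i j m, f (BB n i j) (PP n m) ∈ Hn n ⊓ edeg n (-1) :=
    fun i j m => ⟨(hdeg _ _ _ (Bd i j) _ (Pd m)).1,
      edeg_congr (hdeg _ _ _ (Bd i j) _ (Pd m)).2 (by norm_num)⟩
  have fb : ∀ i j m, f (PP n m) (BB n i j) ∈ Hn n ⊓ edeg n (-1) :=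
    fun i j m => ⟨(hdeg _ _ _ (Pd m) _ (Bd i j)).1,
      edeg_congr (hdeg _ _ _ (Pd m) _ (Bd i j)).2 (by norm_num)⟩
  have sw : ∀ i j v, v ∈ edeg n (-1) → sbL n v (BB n i j) = - sbL n (BB n i j) v := by
    intro i j v hv
    rw [sb_BB_comm i j (edeg_le_epar hv), neg_neg]
  have c0 : ∀ i j m l, kap n l (f (BB n i j) (PP n m)) = - kap n l (f (BB n j i) (PP n m)) := by
    intro i j m l
    rw [BB_anti j i, bil_neg_left, map_neg]
  have c0' : ∀ i j m l, kap n l (f (PP n m) (BB n i j)) = - kap n l (f (PP n m) (BB n j i)) := by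
    intro i j m l
    rw [BB_anti j i, bil_neg_right, map_neg]
  have c1 : ∀ i j k, i ≠ j → i ≠ k → j ≠ k → ∀ m l, kap n l (f (BB n i j) (PP n m)) =
      ((if l = i then kap n k (f (BB n k j) (PP n m)) else 0) -
        (if l = k then kap n i (f (BB n k j) (PP n m)) else 0)) -
      ((if l = k then kap n j (f (BB n i k) (PP n m)) else 0) -
        (if l = j then kap n k (f (BB n i k) (PP n m)) else 0)) := by
    intro i j k hij hik hjk m l
    have h := eq1 _ _ _ _ (Bp i k) _ (Bp k j) _ (Pp m)
    rw [BB_comm i j k hij hik hjk, zero_mul, sgn_zero,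
      one_smul, sw _ _ _ (fa i k m).2, ← sub_eq_add_neg] at h
    rw [h, map_sub,
      kap_sb_BB _ _ _ (fa k j m).1 (fa k j m).2, kap_sb_BB _ _ _ (fa i k m).1 (fa i k m).2]
  have c1' : ∀ i j k, i ≠ j → i ≠ k → j ≠ k → ∀ m l, kap n l (f (PP n m) (BB n i j)) =
      ((if l = i then kap n k (f (PP n m) (BB n k j)) else 0) -
        (if l = k then kap n i (f (PP n m) (BB n k j)) else 0)) -
      ((if l = k then kap n j (f (PP n m) (BB n i k)) else 0) -
        (if l = j then kap n k (f (PP n m) (BB n i k)) else 0)) := by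
    intro i j k hij hik hjk m l
    have h := eq2 _ _ _ _ (Pp m) _ (Bp i k) _ (Bp k j)
    rw [BB_comm i j k hij hik hjk, mul_zero, sgn_zero,
      one_smul, sw _ _ _ (fb i k m).2, add_comm, ← sub_eq_add_neg] at h
    rw [h, map_sub,
      kap_sb_BB _ _ _ (fb k j m).1 (fb k j m).2, kap_sb_BB _ _ _ (fb i k m).1 (fb i k m).2]
  have c2 : ∀ i j k l m s,
      ((if m = l then kap n s (f (BB n i j) (PP n k)) else 0) -
        (if m = k then kap n s (f (BB n i j) (PP n l)) else 0)) -
      ((if s = k then kap n l (f (BB n i j) (PP n m)) else 0) -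
        (if s = l then kap n k (f (BB n i j) (PP n m)) else 0)) =
      ((if m = j then kap n s (f (PP n i) (BB n k l)) else 0) -
        (if m = i then kap n s (f (PP n j) (BB n k l)) else 0)) -
      ((if s = i then kap n j (f (PP n m) (BB n k l)) else 0) -
        (if s = j then kap n i (f (PP n m) (BB n k l)) else 0)) := by
    intro i j k l m s
    have h1 := eq2 _ _ _ _ (Bp i j) _ (Bp k l) _ (Pp m)
    have h2 := eq1 _ _ _ _ (Bp i j) _ (Pp m) _ (Bp k l)
    rw [zero_mul, sgn_zero, one_smul] at h1
    rw [mul_zero, sgn_zero, one_smul] at h2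
    have h3 := congrArg (kap n s) h1
    have h4 := congrArg (kap n s) h2
    rw [map_add, kap_sb_BB _ _ _ (fa i j m).1 (fa i j m).2, sb_BB_PP, bil_ite_right] at h3
    rw [map_add, kap_sb_BB _ _ _ (fb k l m).1 (fb k l m).2, sb_BB_PP, bil_ite_left] at h4
    linear_combination h3 - h4
  obtain ⟨lam, hlam⟩ := core_coeff n hn
    (fun i j m l => kap n l (f (BB n i j) (PP n m)))
    (fun i j m l => kap n l (f (PP n m) (BB n i j))) c0 c0' c1 c1' c2
  refine ⟨lam, ?_, ?_⟩
  · intro i j m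
    by_cases hij : i = j
    · rw [hij, BB_self, map_zero, map_zero, LinearMap.zero_apply, smul_zero]
    · rw [repr_PP (fa i j m).1 (fa i j m).2, sb_BB_PP, ← sum_lam_aux]
      exact Finset.sum_congr rfl (fun l _ => congrArg (· • PP n l) (hlam i j hij m l).1)
  · intro i j m
    by_cases hij : i = j
    · rw [hij, BB_self, map_zero, map_zero, smul_zero]
    · rw [repr_PP (fb i j m).1 (fb i j m).2, sb_PP_BB, ← neg_sub, smul_neg, ← neg_smul,
        ← sum_lam_aux]
      exact Finset.sum_congr rfl (fun l _ => congrArg (· • PP n l) (hlam i j hij m l).2)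

set_option maxHeartbeats 1000000 in
theorem inner_aux (hn : 4 < n) (f : E n →ₗ[ℂ] E n →ₗ[ℂ] E n)
    (hdeg : ∀ j k : ℤ, ∀ x ∈ Hn n ⊓ edeg n j, ∀ y ∈ Hn n ⊓ edeg n k,
      f x y ∈ Hn n ⊓ edeg n (j + k))
    (eq1 : ∀ (α β γ : ZMod 2), ∀ x ∈ Hn n ⊓ epar n α, ∀ y ∈ Hn n ⊓ epar n β,
      ∀ z ∈ Hn n ⊓ epar n γ,
      f (sbL n x y) z = sbL n x (f y z) + sgn (β * γ) • sbL n (f x z) y)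
    (eq2 : ∀ (α β γ : ZMod 2), ∀ x ∈ Hn n ⊓ epar n α, ∀ y ∈ Hn n ⊓ epar n β,
      ∀ z ∈ Hn n ⊓ epar n γ,
      f x (sbL n y z) = sbL n (f x y) z + sgn (α * β) • sbL n y (f x z)) :
    ∃ lam : ℂ, ∀ x ∈ Hn n, ∀ y ∈ Hn n, f x y = lam • sbL n x y := by
  obtain ⟨lam, ka, kb⟩ := inner_low hn f hdeg eq1 eq2
  refine ⟨lam, ?_⟩
  have hz := zero_lemma hn (f + (-lam) • sbL n) ?_ ?_ ?_ ?_ ?_ ?_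
  · intro x hx y hy
    have := hz x hx y hy
    simp only [LinearMap.add_apply, LinearMap.smul_apply] at this
    rw [neg_smul] at this
    exact add_neg_eq_zero.mp this
  · intro j k x hx y hy
    simp only [LinearMap.add_apply, LinearMap.smul_apply]
    have h1 := hdeg j k x hx y hy
    refine ⟨Submodule.add_mem _ h1.2 (Submodule.smul_mem _ _ (edeg_sb hx.2 hy.2)), ?_⟩
    rw [Hn_one h1.1, sb_one hx.2 hy.2 (Hn_one hx.1) (Hn_one hy.1)]; simp
  · intro α β γ x hx y hy z hz
    simp only [LinearMap.add_apply, LinearMap.smul_apply]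
    rw [eq1 α β γ x hx y hy z hz, jacobi1 hx.2 hy.2 hz.2]
    simp only [map_add, map_smul, LinearMap.add_apply, LinearMap.smul_apply]
    module
  · intro α β γ x hx y hy z hz
    simp only [LinearMap.add_apply, LinearMap.smul_apply]
    rw [eq2 α β γ x hx y hy z hz, jacobi2 hx.2 hy.2 hz.2]
    simp only [map_add, map_smul, LinearMap.add_apply, LinearMap.smul_apply]
    module
  · intro i j
    have hi : pd n i ∈ Hn n ⊓ edeg n (-1) := ⟨pd_mem_Hn hn i, pd_mem_edeg i⟩
    have hj : pd n j ∈ Hn n ⊓ edeg n (-1) := ⟨pd_mem_Hn hn j, pd_mem_edeg j⟩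
    have h1 := hdeg _ _ _ hi _ hj
    have e : sbL n (pd n i) (pd n j) = 0 := by
      rw [sb_pd, par_conj (pd_epar j)]
      have : sgn 1 = -1 := by simp [sgn, ZMod.val_one]
      rw [this, e_smul_mul, pd_anti i j]; module
    simp only [LinearMap.add_apply, LinearMap.smul_apply]
    rw [Hn_neg_two h1.1 (edeg_congr h1.2 (by norm_num)), e]; simp
  · intro h hh i
    have hs := DH_two_span hh
    refine Submodule.span_induction (p := fun x _ => (f + (-lam) • sbL n) x (pd n i) = 0)
      ?_ ?_ ?_ ?_ hs
    · rintro _ ⟨p, rfl⟩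
      simp only [LinearMap.add_apply, LinearMap.smul_apply]
      rw [pd_eq_PP i]
      simp only [map_add, map_smul, ka]
      module
    · simp
    · intro x y _ _ h1 h2; rw [map_add, LinearMap.add_apply, h1, h2, add_zero]
    · intro c x _ h1; rw [map_smul, LinearMap.smul_apply, h1, smul_zero]
  · intro h hh i
    have hs := DH_two_span hh
    refine Submodule.span_induction (p := fun x _ => (f + (-lam) • sbL n) (pd n i) x = 0)
      ?_ ?_ ?_ ?_ hs
    · rintro _ ⟨p, rfl⟩
      simp only [LinearMap.add_apply, LinearMap.smul_apply]
      rw [pd_eq_PP i]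
      simp only [map_add, map_smul, LinearMap.add_apply, LinearMap.smul_apply, kb]
      module
    · simp
    · intro x y _ _ h1 h2; rw [map_add, h1, h2, add_zero]
    · intro c x _ h1; rw [map_smul, h1, smul_zero]

theorem main_aux (hn : 4 < n)
    (pf : ZMod 2) (f : E n →ₗ[ℂ] E n →ₗ[ℂ] E n)
    (hf : IsSuperBider n (Hn n) pf f)
    (hd : ∀ (j k : ℤ), ∀ x ∈ Hn n ⊓ edeg n j, ∀ y ∈ Hn n ⊓ edeg n k,
      f x y ∈ Hn n ⊓ edeg n (0 + j + k)) :
    ∃ lam : ℂ, ∀ x ∈ Hn n, ∀ y ∈ Hn n, f x y = lam • sbL n x y := by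
  by_cases hp : pf = 0
  · subst hp
    apply inner_aux hn f
    · intro j k x hx y hy
      have := hd j k x hx y hy
      rwa [zero_add] at this
    · intro α β γ x hx y hy z hz
      rw [hf.eq1 α β γ x hx y hy z hz, mul_zero, sgn_zero, one_smul]
    · intro α β γ x hx y hy z hz
      rw [hf.eq2 α β γ x hx y hy z hz, zero_add]
  · refine ⟨0, ?_⟩
    have hmono : ∀ S T : Finset (Fin n), S ≠ Finset.univ → T ≠ Finset.univ →
        f (DHmap n (mono n S)) (DHmap n (mono n T)) = 0 := by
      have hmem : ∀ S : Finset (Fin n), S ≠ Finset.univ → DHmap n (mono n S) ∈ Hn n := by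
        intro S hS
        refine ⟨mono n S, ?_, rfl⟩
        show mono n S Finset.univ = 0
        simp [mono, hS.symm]
      intro S T hS hT
      have dS := DH_mem_edeg (mono_mem_ldeg S)
      have dT := DH_mem_edeg (mono_mem_ldeg T)
      have h1 := hd _ _ _ ⟨hmem S hS, dS⟩ _ ⟨hmem T hT, dT⟩
      have h2 := hf.maps _ _ _ ⟨hmem S hS, edeg_le_epar dS⟩ _ ⟨hmem T hT, edeg_le_epar dT⟩
      apply edeg_epar_zero h1.2 h2.2
      intro h3
      apply hp
      rw [zero_add, Int.cast_add] at h3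
      exact left_eq_add.mp h3.symm
    rintro x ⟨u, hu, rfl⟩ y ⟨v, hv, rfl⟩
    have hu : u Finset.univ = 0 := hu
    have hv : v Finset.univ = 0 := hv
    rw [zero_smul, lambda_sum u, map_sum, map_sum, LinearMap.sum_apply]
    apply Finset.sum_eq_zero
    intro S _
    rw [map_smul, map_smul, LinearMap.smul_apply]
    by_cases hS : S = Finset.univ
    · rw [hS, hu, zero_smul]
    rw [lambda_sum v, map_sum, map_sum, Finset.sum_eq_zero, smul_zero]
    intro T _
    rw [map_smul, map_smul]
    by_cases hT : T = Finset.univ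
    · rw [hT, hv, zero_smul]
    rw [hmono S T hS hT, smul_zero]

end Aux4

/-- For `L = H(n)`, `n > 4`, a super-biderivation `f ∈ BDer(L)_0` of
ℤ-degree `0` is inner: there is `λ ∈ ℂ` with `f(x,y) = λ[x,y]` for all `x, y ∈ L`. -/
theorem superBider_H_zero_degree_inner (n : ℕ) (hn : 4 < n)
    (pf : ZMod 2) (f : E n →ₗ[ℂ] E n →ₗ[ℂ] E n)
    (hf : IsSuperBider n (CT.H.algebra n) pf f)
    (hd : CT.H.HasDeg n f 0) :
    ∃ lam : ℂ, ∀ x ∈ CT.H.algebra n, ∀ y ∈ CT.H.algebra n, f x y = lam • sbL n x y := by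
  exact main_aux hn pf f hf hd

end CartanSuper
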